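/- Let $(\phi_k)$ be a wavelet-type system and $(p_n)$ a sequence of $L^2$-normalized non-overlapping $\Phi$-polynomials, i.e. $p_n = \sum_{j\in G_n} c_j \phi_j$ with $\|p_n\|_{L^2} = 1$ and the finite sets $G_n \subset \mathbb{N}$ pairwise disjoint. If the coefficients $(a_n)$ satisfy $\sum_{n=1}^\infty a_n^2 \log(n+1) < \infty$, then the series $\sum_{n=1}^\infty a_n p_n(x)$ converges almost everywhere on $[0,1]$. -/

import Mathlib

open MeasureTheory Set

noncomputable section

/-- The decay profile `ξ(x) = (1+|x|)^{-(1+δ)}`. -/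
def xi (δ x : ℝ) : ℝ := (1 + |x|) ^ (-(1 + δ))

/-- The center `t_k = (2j-1)/2^m` for `k = 2^{m-1} + j`, `1 ≤ j ≤ 2^{m-1}`. -/
def tpt (m k : ℕ) : ℝ := (2 * ((k : ℝ) - 2 ^ (m - 1)) - 1) / 2 ^ m

/-- Decay bound of a wavelet-type system: for `2^{m-1} < k ≤ 2^m`,
`|φ_k(x)| ≤ c 2^{m/2} ξ(2^m (x - t_k))`. -/
def WaveletDecay (δ c : ℝ) (φ : ℕ → ℝ → ℝ) : Prop :=
  ∀ m : ℕ, 1 ≤ m → ∀ k ∈ Finset.Ioc (2 ^ (m - 1)) (2 ^ m), ∀ x ∈ Set.Icc (0:ℝ) 1,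
    |φ k x| ≤ c * 2 ^ ((m : ℝ) / 2) * xi δ (2 ^ m * (x - tpt m k))

/-- Hölder bound of a wavelet-type system: for `2^{m-1} < k ≤ 2^m` and
`|t - t'| ≤ 2^{-m}`, `|φ_k(t) - φ_k(t')| ≤ c 2^{m/2} (2^m |t-t'|)^α ξ(2^m (t - t_k))`. -/
def WaveletHolder (δ α c : ℝ) (φ : ℕ → ℝ → ℝ) : Prop :=
  ∀ m : ℕ, 1 ≤ m → ∀ k ∈ Finset.Ioc (2 ^ (m - 1)) (2 ^ m),
    ∀ t ∈ Set.Icc (0:ℝ) 1, ∀ t' ∈ Set.Icc (0:ℝ) 1, |t - t'| ≤ ((2 : ℝ) ^ m)⁻¹ →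
      |φ k t - φ k t'| ≤
        c * 2 ^ ((m : ℝ) / 2) * (2 ^ m * |t - t'|) ^ α * xi δ (2 ^ m * (t - tpt m k))

/-- A wavelet-type system: measurable, orthonormal on `(0,1)`, mean zero, with the
decay and Hölder bounds. -/
def IsWaveletSystem (δ α c : ℝ) (φ : ℕ → ℝ → ℝ) : Prop :=
  (∀ k, Measurable (φ k)) ∧
  (∀ j k : ℕ, 1 ≤ j → 1 ≤ k →
    (∫ x in Set.Ioo (0:ℝ) 1, φ j x * φ k x) = if j = k then 1 else 0) ∧
  (∀ k : ℕ, 1 ≤ k → (∫ x in Set.Ioo (0:ℝ) 1, φ k x) = 0) ∧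
  WaveletDecay δ c φ ∧ WaveletHolder δ α c φ

/-!
The averages of `f` over the dyadic intervals of `[0, 1]` form a martingale `v`. If `g` dominates
its differences and `s = ε + ∑ g²`, then the mean of `s * exp (v² / (4 * s))` exceeds that of `s` by
at most a constant factor, so `v² / s` is exponentially integrable with weight `s`. Hence, in `L²`,
the maximum of `n` martingales with one common majorant `g` is at most a multiple of
`√(log (n + 1))` times the norm of the square function of `g`.

The partial sums of `∑ b j * φ j` over arbitrary sets of indices have such a common majorant, namely
`∑ |b j| * |Δ (φ j)|`. The decay, the vanishing mean and the Hölder bound make the difference of a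
wavelet of level `m` at the dyadic level `k` decay geometrically in `|m - k|`, and Schur's test then
bounds the square function of the majorant by `∑ b j ^ 2`. Finally, blocks with endpoints
`2 ^ 2 ^ k`, on which the logarithm is of size `2 ^ k`, convert the maximal inequality into
convergence.
-/

/-! ### Dyadic martingales -/

/-- The self-normalized exponential `s e^{v² / 4s}`: for a martingale `v` whose differences are
dominated by `g`, its mean along `s = ε + ∑ g²` is at most a constant times that of `s`. -/
def selfNormalizedExp (s v : ℝ) : ℝ := s * Real.exp (v ^ 2 / (4 * s))

theorem selfNormalizedExp_pos {s : ℝ} (hs : 0 < s) (v : ℝ) : 0 < selfNormalizedExp s v :=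
  mul_pos hs (Real.exp_pos _)

theorem exp_symm_average_le {σ : ℝ} (hσ : 0 < σ) (v d : ℝ) :
    (Real.exp ((v + d) ^ 2 / (4 * σ)) + Real.exp ((v - d) ^ 2 / (4 * σ))) / 2 ≤
      Real.exp (v ^ 2 / (4 * σ) + d ^ 2 / (4 * σ) + v ^ 2 * d ^ 2 / (8 * σ ^ 2)) := by
  have h_plus : (v + d) ^ 2 / (4 * σ) = v ^ 2 / (4 * σ) + d ^ 2 / (4 * σ) + v * d / (2 * σ) := by
    field_simp; ring
  have h_minus : (v - d) ^ 2 / (4 * σ) =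
      v ^ 2 / (4 * σ) + d ^ 2 / (4 * σ) + -(v * d / (2 * σ)) := by
    field_simp; ring
  rw [h_plus, h_minus, Real.exp_add _ (v * d / (2 * σ)), Real.exp_add _ (-(v * d / (2 * σ))),
    ← mul_add, mul_div_assoc, ← Real.cosh_eq, Real.exp_add _ (v ^ 2 * d ^ 2 / (8 * σ ^ 2))]
  gcongr
  refine (Real.cosh_le_exp_half_sq _).trans_eq (congrArg Real.exp ?_)
  field_simp; ring

-- For large `x` the growth of `x / (1 - θ)` wins; for small `x` both sides differ by `O(θ)`.
theorem exp_add_mul_le {x θ : ℝ} (hx : 0 ≤ x) (hθ0 : 0 ≤ θ) (hθ1 : θ < 1) :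
    Real.exp (x + θ / 4 + x * θ / 2) ≤
      (1 - θ) * Real.exp (x / (1 - θ)) + 5 / 2 * Real.exp 4 * θ := by
  have hθ' : 0 < 1 - θ := by linarith
  rcases le_total (5 / 2) x with hx' | hx'
  · have h_weight : Real.exp (-(θ / (1 - θ))) ≤ 1 - θ := by
      rw [← Real.le_log_iff_exp_le hθ']
      refine le_trans (le_of_eq ?_) (Real.one_sub_inv_le_log_of_pos hθ')
      field_simp; ring
    have h_quot : x + θ / 4 + x * θ / 2 ≤ -(θ / (1 - θ)) + x / (1 - θ) := by
      rw [← neg_div, ← add_div, le_div_iff₀ hθ']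
      nlinarith [mul_nonneg hθ0 hθ0, mul_nonneg (mul_nonneg hθ0 hθ0) hx]
    calc Real.exp (x + θ / 4 + x * θ / 2)
        ≤ Real.exp (-(θ / (1 - θ))) * Real.exp (x / (1 - θ)) := by
          rw [← Real.exp_add]; exact Real.exp_le_exp.2 h_quot
      _ ≤ (1 - θ) * Real.exp (x / (1 - θ)) := by gcongr
      _ ≤ _ := by have := Real.exp_pos 4; nlinarith
  · have h_quot : x ≤ x / (1 - θ) := by rw [le_div_iff₀ hθ']; nlinarith
    have h_linear : Real.exp (3 / 2 * θ) ≤ 1 + 3 / 2 * Real.exp (3 / 2) * θ := by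
      have h_one : Real.exp (3 / 2 * θ) * (1 - 3 / 2 * θ) ≤ 1 := by
        have := Real.add_one_le_exp (-(3 / 2 * θ))
        calc _ ≤ Real.exp (3 / 2 * θ) * Real.exp (-(3 / 2 * θ)) := by gcongr; linarith
          _ = 1 := by rw [← Real.exp_add]; simp
      have h_mono : Real.exp (3 / 2 * θ) ≤ Real.exp (3 / 2) := Real.exp_le_exp.2 (by linarith)
      nlinarith
    have h_exp : 1 ≤ Real.exp (3 / 2) := Real.one_le_exp (by norm_num)
    calc Real.exp (x + θ / 4 + x * θ / 2) ≤ Real.exp x * Real.exp (3 / 2 * θ) := by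
          rw [← Real.exp_add]; exact Real.exp_le_exp.2 (by nlinarith)
      _ ≤ Real.exp x * ((1 - θ) + 5 / 2 * Real.exp (3 / 2) * θ) := by
          gcongr; nlinarith
      _ ≤ (1 - θ) * Real.exp (x / (1 - θ)) + 5 / 2 * (Real.exp (5 / 2) * Real.exp (3 / 2)) * θ := by
          have h1 : Real.exp x ≤ Real.exp (x / (1 - θ)) := Real.exp_le_exp.2 h_quot
          have h2 : Real.exp x ≤ Real.exp (5 / 2) := Real.exp_le_exp.2 hx'
          have h3 : Real.exp x * (5 / 2 * Real.exp (3 / 2) * θ) ≤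
              Real.exp (5 / 2) * (5 / 2 * Real.exp (3 / 2) * θ) := by gcongr
          nlinarith [mul_le_mul_of_nonneg_left h1 hθ'.le]
      _ = _ := by rw [← Real.exp_add]; norm_num

theorem selfNormalizedExp_average_le {s v d g : ℝ} (hs : 0 < s) (hd : |d| ≤ g) :
    (selfNormalizedExp (s + g ^ 2) (v + d) + selfNormalizedExp (s + g ^ 2) (v - d)) / 2 ≤
      selfNormalizedExp s v + 5 / 2 * Real.exp 4 * g ^ 2 := by
  have hσ : 0 < s + g ^ 2 := by positivity
  have hd2 : d ^ 2 ≤ g ^ 2 := sq_le_sq' (abs_le.1 hd).1 (abs_le.1 hd).2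
  have hθ : 1 - g ^ 2 / (s + g ^ 2) = s / (s + g ^ 2) := by field_simp; ring
  have h_key := exp_add_mul_le (x := v ^ 2 / (4 * (s + g ^ 2))) (θ := g ^ 2 / (s + g ^ 2))
    (by positivity) (by positivity) (by rw [div_lt_one hσ]; linarith)
  unfold selfNormalizedExp
  calc _ = (s + g ^ 2) * ((Real.exp ((v + d) ^ 2 / (4 * (s + g ^ 2))) +
          Real.exp ((v - d) ^ 2 / (4 * (s + g ^ 2)))) / 2) := by ring
    _ ≤ (s + g ^ 2) * Real.exp (v ^ 2 / (4 * (s + g ^ 2)) + g ^ 2 / (4 * (s + g ^ 2)) +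
          v ^ 2 * g ^ 2 / (8 * (s + g ^ 2) ^ 2)) := by
        gcongr
        refine (exp_symm_average_le hσ v d).trans ?_
        gcongr
    _ = (s + g ^ 2) * Real.exp (v ^ 2 / (4 * (s + g ^ 2)) + g ^ 2 / (s + g ^ 2) / 4 +
          v ^ 2 / (4 * (s + g ^ 2)) * (g ^ 2 / (s + g ^ 2)) / 2) := by
        congr 2; field_simp; ring
    _ ≤ (s + g ^ 2) * _ := mul_le_mul_of_nonneg_left h_key hσ.le
    _ = s * Real.exp (v ^ 2 / (4 * s)) + 5 / 2 * Real.exp 4 * g ^ 2 := by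
        rw [hθ, show v ^ 2 / (4 * (s + g ^ 2)) / (s / (s + g ^ 2)) = v ^ 2 / (4 * s) by
          field_simp]
        field_simp

theorem sq_le_mul_log_add_selfNormalizedExp {N s : ℝ} (hN : 0 < N) (hs : 0 < s) (v : ℝ) :
    v ^ 2 ≤ 4 * (s * Real.log N + N⁻¹ * selfNormalizedExp s v) := by
  have h := (Real.add_one_le_exp (v ^ 2 / (4 * s) - Real.log N)).trans_eq (Real.exp_sub _ _)
  rw [Real.exp_log hN] at h
  have h' := mul_le_mul_of_nonneg_left h hs.le
  have : s * (v ^ 2 / (4 * s)) = v ^ 2 / 4 := by field_simp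
  have : s * (Real.exp (v ^ 2 / (4 * s)) / N) = N⁻¹ * selfNormalizedExp s v := by
    unfold selfNormalizedExp; ring
  nlinarith

/-- Mean over the `2 ^ K` dyadic intervals of level `K`. -/
def dyadicMean (K : ℕ) (F : ℕ → ℝ) : ℝ := (∑ l ∈ Finset.range (2 ^ K), F l) / 2 ^ K

theorem sum_range_two_mul (n : ℕ) (F : ℕ → ℝ) :
    ∑ l ∈ Finset.range (2 * n), F l =
      ∑ l ∈ Finset.range n, (F (2 * l) + F (2 * l + 1)) := by
  induction n with
  | zero => simp
  | succ n ih =>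
    rw [show 2 * (n + 1) = 2 * n + 1 + 1 by ring, Finset.sum_range_succ, Finset.sum_range_succ,
      Finset.sum_range_succ, ih]
    ring

theorem dyadicMean_succ (K : ℕ) (F : ℕ → ℝ) :
    dyadicMean (K + 1) F = dyadicMean K fun l => (F (2 * l) + F (2 * l + 1)) / 2 := by
  unfold dyadicMean
  rw [pow_succ', sum_range_two_mul, ← Finset.sum_div, pow_succ', div_div]

theorem dyadicMean_mono {K : ℕ} {F H : ℕ → ℝ} (h : ∀ l < 2 ^ K, F l ≤ H l) :
    dyadicMean K F ≤ dyadicMean K H := by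
  unfold dyadicMean
  gcongr with l hl
  exact h l (Finset.mem_range.1 hl)

theorem dyadicMean_add (K : ℕ) (F H : ℕ → ℝ) :
    dyadicMean K (fun l => F l + H l) = dyadicMean K F + dyadicMean K H := by
  simp only [dyadicMean, Finset.sum_add_distrib, add_div]

theorem dyadicMean_const_mul (K : ℕ) (c : ℝ) (F : ℕ → ℝ) :
    dyadicMean K (fun l => c * F l) = c * dyadicMean K F := by
  simp only [dyadicMean, ← Finset.mul_sum, mul_div_assoc]

theorem dyadicMean_sum {ι : Type*} (K : ℕ) (s : Finset ι) (F : ι → ℕ → ℝ) :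
    dyadicMean K (fun l => ∑ i ∈ s, F i l) = ∑ i ∈ s, dyadicMean K (F i) := by
  simp only [dyadicMean]
  rw [Finset.sum_comm, Finset.sum_div]

/-- Accumulated square function `ε + ∑ g²` of `g`: the values of `g` at level `k` are indexed by the
`2 ^ k` dyadic intervals of that level, and the parent of the interval `l` is `l / 2`. -/
def accSq (ε : ℝ) (g : ℕ → ℕ → ℝ) : ℕ → ℕ → ℝ
  | 0, _ => ε
  | K + 1, l => accSq ε g K (l / 2) + g K (l / 2) ^ 2

theorem accSq_pos {ε : ℝ} (hε : 0 < ε) (g : ℕ → ℕ → ℝ) (K l : ℕ) : 0 < accSq ε g K l := by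
  induction K generalizing l with
  | zero => exact hε
  | succ K ih => have := ih (l / 2); rw [accSq]; positivity

theorem accSq_succ_even (ε : ℝ) (g : ℕ → ℕ → ℝ) (K l : ℕ) :
    accSq ε g (K + 1) (2 * l) = accSq ε g K l + g K l ^ 2 := by
  rw [accSq, Nat.mul_div_cancel_left l two_pos]

theorem accSq_succ_odd (ε : ℝ) (g : ℕ → ℕ → ℝ) (K l : ℕ) :
    accSq ε g (K + 1) (2 * l + 1) = accSq ε g K l + g K l ^ 2 := by
  rw [accSq, show (2 * l + 1) / 2 = l by omega]

theorem dyadicMean_accSq (ε : ℝ) (g : ℕ → ℕ → ℝ) (K : ℕ) :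
    dyadicMean K (accSq ε g K) =
      ε + ∑ k ∈ Finset.range K, dyadicMean k fun l => g k l ^ 2 := by
  induction K with
  | zero => simp [dyadicMean, accSq]
  | succ K ih =>
    rw [dyadicMean_succ, Finset.sum_range_succ, ← add_assoc, ← ih, ← dyadicMean_add]
    congr 1
    ext l
    rw [accSq_succ_even, accSq_succ_odd]
    ring

/-- A dyadic martingale: a family indexed by levels `k` and dyadic intervals `l < 2 ^ k` whose value
on each interval is the average of the values on the two halves. -/
def IsDyadicMartingale (v : ℕ → ℕ → ℝ) : Prop :=
  ∀ k l, l < 2 ^ k → v k l = (v (k + 1) (2 * l) + v (k + 1) (2 * l + 1)) / 2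

/-- The martingale difference of `v` on the interval `l` of level `k`, up to sign: `v` increases by
this amount on the left half and decreases by it on the right half. -/
def dyadicIncrement (v : ℕ → ℕ → ℝ) (k l : ℕ) : ℝ :=
  (v (k + 1) (2 * l) - v (k + 1) (2 * l + 1)) / 2

theorem IsDyadicMartingale.add_dyadicIncrement {v : ℕ → ℕ → ℝ} (hv : IsDyadicMartingale v)
    {k l : ℕ} (hl : l < 2 ^ k) : v k l + dyadicIncrement v k l = v (k + 1) (2 * l) := by
  rw [hv k l hl, dyadicIncrement]; ring

theorem IsDyadicMartingale.sub_dyadicIncrement {v : ℕ → ℕ → ℝ} (hv : IsDyadicMartingale v)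
    {k l : ℕ} (hl : l < 2 ^ k) : v k l - dyadicIncrement v k l = v (k + 1) (2 * l + 1) := by
  rw [hv k l hl, dyadicIncrement]; ring

theorem IsDyadicMartingale.dyadicMean_selfNormalizedExp_le {v g : ℕ → ℕ → ℝ} {ε : ℝ}
    (hv : IsDyadicMartingale v) (hε : 0 < ε) (hv0 : v 0 0 = 0)
    (hg : ∀ k l, l < 2 ^ k → |dyadicIncrement v k l| ≤ g k l) (K : ℕ) :
    dyadicMean K (fun l => selfNormalizedExp (accSq ε g K l) (v K l)) ≤
      5 / 2 * Real.exp 4 * dyadicMean K (accSq ε g K) := by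
  rw [dyadicMean_accSq]
  induction K with
  | zero =>
    have : 1 ≤ Real.exp 4 := Real.one_le_exp (by norm_num)
    simp only [dyadicMean, accSq, pow_zero, Finset.sum_range_one, hv0, selfNormalizedExp,
      Finset.range_zero, Finset.sum_empty]
    norm_num
    nlinarith
  | succ K ih =>
    rw [dyadicMean_succ, Finset.sum_range_succ, ← add_assoc, mul_add]
    refine le_trans ?_ (add_le_add_left ih _)
    rw [← dyadicMean_const_mul, ← dyadicMean_add]
    refine dyadicMean_mono fun l hl => ?_
    rw [accSq_succ_even, accSq_succ_odd, ← hv.add_dyadicIncrement hl, ← hv.sub_dyadicIncrement hl]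
    exact selfNormalizedExp_average_le (accSq_pos hε g K l) (hg K l hl)

/-- The absolute constant of the maximal inequality for dyadic martingales. -/
def maximalConst : ℝ := 4 * (1 + 5 / 2 * Real.exp 4)

theorem maximalConst_pos : 0 < maximalConst := by unfold maximalConst; positivity

theorem iSup_sq_le_mul_log_add_sum_selfNormalizedExp {ι : Type*} [Fintype ι] {s : ℝ} (hs : 0 < s)
    (v : ι → ℝ) :
    ⨆ i, v i ^ 2 ≤ 4 * (s * Real.log (Fintype.card ι + 1) +
      ((Fintype.card ι : ℝ) + 1)⁻¹ * ∑ i, selfNormalizedExp s (v i)) := by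
  have h_nonneg : ∀ i ∈ Finset.univ, 0 ≤ selfNormalizedExp s (v i) := fun i _ =>
    (selfNormalizedExp_pos hs (v i)).le
  have h_log : 0 ≤ Real.log (Fintype.card ι + 1) :=
    Real.log_nonneg (le_add_of_nonneg_left (Nat.cast_nonneg _))
  refine Real.iSup_le (fun i => ?_) ?_
  · have h_card : (0 : ℝ) < Fintype.card ι + 1 := Nat.cast_add_one_pos _
    refine (sq_le_mul_log_add_selfNormalizedExp h_card hs _).trans ?_
    gcongr
    exact Finset.single_le_sum h_nonneg (Finset.mem_univ i)
  · have := Finset.sum_nonneg h_nonneg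
    positivity

theorem dyadicMean_iSup_sq_le_accSq {ι : Type*} [Fintype ι] {v : ι → ℕ → ℕ → ℝ} {g : ℕ → ℕ → ℝ}
    {ε : ℝ} (hε : 0 < ε) (hv : ∀ i, IsDyadicMartingale (v i)) (hv0 : ∀ i, v i 0 0 = 0)
    (hg : ∀ i k l, l < 2 ^ k → |dyadicIncrement (v i) k l| ≤ g k l) (K : ℕ) :
    dyadicMean K (fun l => ⨆ i, v i K l ^ 2) ≤
      maximalConst * Real.log (Fintype.card ι + 1) * dyadicMean K (accSq ε g K) := by
  set N : ℝ := Fintype.card ι + 1 with hN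
  set E := dyadicMean K (accSq ε g K)
  have hN0 : 0 < N := by positivity
  have hE : 0 ≤ E :=
    div_nonneg (Finset.sum_nonneg fun l _ => (accSq_pos hε g K l).le) (by positivity)
  have h_card : N⁻¹ * Fintype.card ι ≤ Real.log N := by
    refine le_trans (le_of_eq ?_) (Real.one_sub_inv_le_log_of_pos hN0)
    rw [hN]; field_simp; ring
  calc _ ≤ 4 * (E * Real.log N + N⁻¹ *
        ∑ i, dyadicMean K (fun l => selfNormalizedExp (accSq ε g K l) (v i K l))) := by
        refine (dyadicMean_mono fun l _ =>
          iSup_sq_le_mul_log_add_sum_selfNormalizedExp (accSq_pos hε g K l) _).trans_eq ?_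
        simp only [mul_comm _ (Real.log _)]
        rw [dyadicMean_const_mul, dyadicMean_add, dyadicMean_const_mul, dyadicMean_const_mul,
          dyadicMean_sum]
    _ ≤ 4 * (E * Real.log N + N⁻¹ * ∑ _i : ι, 5 / 2 * Real.exp 4 * E) := by
        gcongr with i
        exact (hv i).dyadicMean_selfNormalizedExp_le hε (hv0 i) (hg i) K
    _ = 4 * (Real.log N + 5 / 2 * Real.exp 4 * (N⁻¹ * Fintype.card ι)) * E := by
        rw [Finset.sum_const, Finset.card_univ, nsmul_eq_mul]; ring
    _ ≤ 4 * (Real.log N + 5 / 2 * Real.exp 4 * Real.log N) * E := by gcongr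
    _ = maximalConst * Real.log N * E := by unfold maximalConst; ring

theorem dyadicMean_iSup_sq_le {ι : Type*} [Fintype ι] {v : ι → ℕ → ℕ → ℝ} {g : ℕ → ℕ → ℝ}
    (hv : ∀ i, IsDyadicMartingale (v i)) (hv0 : ∀ i, v i 0 0 = 0)
    (hg : ∀ i k l, l < 2 ^ k → |dyadicIncrement (v i) k l| ≤ g k l) (K : ℕ) :
    dyadicMean K (fun l => ⨆ i, v i K l ^ 2) ≤ maximalConst * Real.log (Fintype.card ι + 1) *
      ∑ k ∈ Finset.range K, dyadicMean k (fun l => g k l ^ 2) := by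
  set M := maximalConst * Real.log (Fintype.card ι + 1)
  set S := ∑ k ∈ Finset.range K, dyadicMean k (fun l => g k l ^ 2)
  have h_tendsto : Filter.Tendsto (fun ε => M * (ε + S)) (nhdsWithin 0 (Ioi 0)) (nhds (M * S)) := by
    have : Continuous fun ε => M * (ε + S) := by fun_prop
    simpa using (this.tendsto 0).mono_left nhdsWithin_le_nhds
  refine ge_of_tendsto h_tendsto (eventually_mem_nhdsWithin.mono fun ε hε => ?_)
  rw [← dyadicMean_accSq]
  exact dyadicMean_iSup_sq_le_accSq hε hv hv0 hg K

/-! ### Dyadic averages of functions -/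

theorem intervalIntegrable_of_continuousOn_Icc {f : ℝ → ℝ} {a b p q : ℝ}
    (hf : ContinuousOn f (Icc a b)) (hp : p ∈ Icc a b) (hq : q ∈ Icc a b) :
    IntervalIntegrable f volume p q :=
  (hf.mono (uIcc_subset_Icc hp hq)).intervalIntegrable

/-- The dyadic rational `l / 2 ^ k`; the dyadic interval `l` of level `k` has the endpoints
`dyadicPoint k l` and `dyadicPoint k (l + 1)`. -/
def dyadicPoint (k l : ℕ) : ℝ := l / 2 ^ k

theorem dyadicPoint_mem_Icc {k l : ℕ} (hl : l ≤ 2 ^ k) : dyadicPoint k l ∈ Icc (0 : ℝ) 1 := by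
  have : (l : ℝ) ≤ 2 ^ k := by exact_mod_cast hl
  exact ⟨by unfold dyadicPoint; positivity, div_le_one_of_le₀ this (by positivity)⟩

theorem dyadicPoint_le_succ (k l : ℕ) : dyadicPoint k l ≤ dyadicPoint k (l + 1) := by
  unfold dyadicPoint; gcongr; simp

theorem dyadicPoint_succ_sub (k l : ℕ) :
    dyadicPoint k (l + 1) - dyadicPoint k l = ((2 : ℝ) ^ k)⁻¹ := by
  unfold dyadicPoint; push_cast; ring

theorem dyadicPoint_succ_two_mul (k l : ℕ) : dyadicPoint (k + 1) (2 * l) = dyadicPoint k l := by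
  unfold dyadicPoint; rw [pow_succ']; push_cast; field_simp

theorem mem_Ico_dyadicPoint_iff {k l : ℕ} {x : ℝ} (hx : 0 ≤ x) :
    x ∈ Ico (dyadicPoint k l) (dyadicPoint k (l + 1)) ↔ ⌊2 ^ k * x⌋₊ = l := by
  have hk : (0 : ℝ) < 2 ^ k := by positivity
  rw [Nat.floor_eq_iff (by positivity), mem_Ico, dyadicPoint, dyadicPoint, div_le_iff₀' hk,
    lt_div_iff₀' hk, Nat.cast_succ]

theorem floor_two_pow_mul_lt {x : ℝ} (hx : x ∈ Ico (0 : ℝ) 1) (k : ℕ) : ⌊2 ^ k * x⌋₊ < 2 ^ k := by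
  have hk : (0 : ℝ) < 2 ^ k := by positivity
  rw [Nat.floor_lt (mul_nonneg hk.le hx.1)]
  push_cast
  nlinarith [hx.2]

theorem Ico_zero_one_eq_biUnion_dyadic (k : ℕ) :
    Ico (0 : ℝ) 1 =
      ⋃ l ∈ Finset.range (2 ^ k), Ico (dyadicPoint k l) (dyadicPoint k (l + 1)) := by
  ext x
  simp only [mem_iUnion, Finset.mem_range, exists_prop]
  constructor
  · exact fun hx => ⟨_, floor_two_pow_mul_lt hx k, (mem_Ico_dyadicPoint_iff hx.1).2 rfl⟩
  · exact fun ⟨l, hl, hx⟩ => ⟨(dyadicPoint_mem_Icc hl.le).1.trans hx.1,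
      hx.2.trans_le (dyadicPoint_mem_Icc hl).2⟩

theorem lintegral_ofReal_comp_floor (K : ℕ) {F : ℕ → ℝ} (hF : ∀ l, 0 ≤ F l) :
    ∫⁻ x in Ico (0 : ℝ) 1, ENNReal.ofReal (F ⌊2 ^ K * x⌋₊) = ENNReal.ofReal (dyadicMean K F) := by
  have h_floor : ∀ l, ∀ x ∈ Ico (dyadicPoint K l) (dyadicPoint K (l + 1)), ⌊2 ^ K * x⌋₊ = l :=
    fun l x hx => (mem_Ico_dyadicPoint_iff ((by unfold dyadicPoint; positivity : (0 : ℝ) ≤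
      dyadicPoint K l).trans hx.1)).1 hx
  rw [Ico_zero_one_eq_biUnion_dyadic K, lintegral_biUnion_finset, dyadicMean, Finset.sum_div,
    ENNReal.ofReal_sum_of_nonneg fun l _ => div_nonneg (hF l) (by positivity)]
  · refine Finset.sum_congr rfl fun l _ => ?_
    rw [setLIntegral_congr_fun measurableSet_Ico (g := fun _ => ENNReal.ofReal (F l))
      fun x hx => by simp only [h_floor l x hx], setLIntegral_const, Real.volume_Ico,
      dyadicPoint_succ_sub, ← ENNReal.ofReal_mul (hF l), div_eq_mul_inv]
  · exact fun i _ j _ hij =>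
      Set.disjoint_left.2 fun x hi hj => hij ((h_floor i x hi).symm.trans (h_floor j x hj))
  · exact fun _ _ => measurableSet_Ico

/-- Average of `f` over the dyadic interval `l` of level `k`. -/
def dyadicAvg (f : ℝ → ℝ) (k l : ℕ) : ℝ :=
  2 ^ k * ∫ x in dyadicPoint k l..dyadicPoint k (l + 1), f x

theorem isDyadicMartingale_dyadicAvg {f : ℝ → ℝ} (hf : ContinuousOn f (Icc 0 1)) :
    IsDyadicMartingale (dyadicAvg f) := by
  intro k l hl
  have hpow : 2 ^ (k + 1) = 2 * 2 ^ k := pow_succ' 2 k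
  have h_left := dyadicPoint_mem_Icc (k := k + 1) (l := 2 * l) (by omega)
  have h_mid := dyadicPoint_mem_Icc (k := k + 1) (l := 2 * l + 1) (by omega)
  have h_right := dyadicPoint_mem_Icc (k := k + 1) (l := 2 * (l + 1)) (by omega)
  rw [dyadicAvg, ← dyadicPoint_succ_two_mul k l, ← dyadicPoint_succ_two_mul k (l + 1),
    ← intervalIntegral.integral_add_adjacent_intervals
      (intervalIntegrable_of_continuousOn_Icc hf h_left h_mid)
      (intervalIntegrable_of_continuousOn_Icc hf h_mid h_right), dyadicAvg, dyadicAvg, pow_succ,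
    show 2 * (l + 1) = 2 * l + 1 + 1 by ring]
  ring

theorem dyadicIncrement_dyadicAvg (f : ℝ → ℝ) (k l : ℕ) :
    dyadicIncrement (dyadicAvg f) k l = 2 ^ k *
      ((∫ x in dyadicPoint (k + 1) (2 * l)..dyadicPoint (k + 1) (2 * l + 1), f x) -
        ∫ x in dyadicPoint (k + 1) (2 * l + 1)..dyadicPoint (k + 1) (2 * l + 1 + 1), f x) := by
  rw [dyadicIncrement, dyadicAvg, dyadicAvg, pow_succ]
  ring

section LinearCombination

variable {κ : Type*} {T : Finset κ} {φ : κ → ℝ → ℝ} {k l : ℕ}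

theorem dyadicAvg_sum (hφ : ∀ j ∈ T, ContinuousOn (φ j) (Icc 0 1)) (b : κ → ℝ) (hl : l < 2 ^ k) :
    dyadicAvg (fun x => ∑ j ∈ T, b j * φ j x) k l = ∑ j ∈ T, b j * dyadicAvg (φ j) k l := by
  simp only [dyadicAvg]
  rw [intervalIntegral.integral_finsetSum fun j hj => (intervalIntegrable_of_continuousOn_Icc
    (hφ j hj) (dyadicPoint_mem_Icc hl.le) (dyadicPoint_mem_Icc hl)).const_mul _, Finset.mul_sum]
  refine Finset.sum_congr rfl fun j _ => ?_
  rw [intervalIntegral.integral_const_mul]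
  ring

theorem dyadicIncrement_dyadicAvg_sum (hφ : ∀ j ∈ T, ContinuousOn (φ j) (Icc 0 1)) (b : κ → ℝ)
    (hl : l < 2 ^ k) :
    dyadicIncrement (dyadicAvg fun x => ∑ j ∈ T, b j * φ j x) k l =
      ∑ j ∈ T, b j * dyadicIncrement (dyadicAvg (φ j)) k l := by
  have hpow : 2 ^ (k + 1) = 2 * 2 ^ k := pow_succ' 2 k
  simp only [dyadicIncrement]
  rw [dyadicAvg_sum hφ b (by omega), dyadicAvg_sum hφ b (by omega), ← Finset.sum_sub_distrib,
    Finset.sum_div]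
  exact Finset.sum_congr rfl fun j _ => by ring

end LinearCombination

theorem abs_dyadicAvg_sub_le {f : ℝ → ℝ} (hf : ContinuousOn f (Icc 0 1)) {k l : ℕ}
    (hl : l < 2 ^ k) {a ε : ℝ}
    (h : ∀ y ∈ Icc (dyadicPoint k l) (dyadicPoint k (l + 1)), |f y - a| ≤ ε) :
    |dyadicAvg f k l - a| ≤ ε := by
  have hk : (0 : ℝ) < 2 ^ k := by positivity
  have h_sub : dyadicAvg f k l - a =
      2 ^ k * ∫ x in dyadicPoint k l..dyadicPoint k (l + 1), (f x - a) := by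
    rw [intervalIntegral.integral_sub (intervalIntegrable_of_continuousOn_Icc hf
      (dyadicPoint_mem_Icc hl.le) (dyadicPoint_mem_Icc hl)) intervalIntegrable_const,
      intervalIntegral.integral_const, dyadicPoint_succ_sub, dyadicAvg, smul_eq_mul]
    field_simp
  have h_bound := intervalIntegral.norm_integral_le_of_norm_le_const (a := dyadicPoint k l)
    (b := dyadicPoint k (l + 1)) (f := fun x => f x - a) (C := ε) fun x hx => by
      rw [uIoc_of_le (dyadicPoint_le_succ k l)] at hx
      exact h x (Ioc_subset_Icc_self hx)
  rw [dyadicPoint_succ_sub, abs_of_pos (inv_pos.2 hk), Real.norm_eq_abs] at h_bound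
  rw [h_sub, abs_mul, abs_of_pos hk]
  calc _ ≤ 2 ^ k * (ε * ((2 : ℝ) ^ k)⁻¹) := by gcongr
    _ = ε := by field_simp

theorem tendsto_dyadicAvg {f : ℝ → ℝ} (hf : ContinuousOn f (Icc 0 1)) {x : ℝ}
    (hx : x ∈ Ico (0 : ℝ) 1) :
    Filter.Tendsto (fun k : ℕ => dyadicAvg f k ⌊2 ^ k * x⌋₊) Filter.atTop (nhds (f x)) := by
  rw [Metric.tendsto_atTop]
  intro ε hε
  obtain ⟨δ, hδ, hfδ⟩ :=
    Metric.continuousOn_iff.1 hf x (Ico_subset_Icc_self hx) (ε / 2) (half_pos hε)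
  obtain ⟨N, hN⟩ := exists_pow_lt_of_lt_one hδ (by norm_num : (2⁻¹ : ℝ) < 1)
  refine ⟨N, fun k hk => ?_⟩
  have hl := floor_two_pow_mul_lt hx k
  have hx_mem := (mem_Ico_dyadicPoint_iff (k := k) hx.1).2 rfl
  have h_len := dyadicPoint_succ_sub k ⌊2 ^ k * x⌋₊
  have h_pow : ((2 : ℝ) ^ k)⁻¹ ≤ 2⁻¹ ^ N := by
    rw [← inv_pow]; exact pow_le_pow_of_le_one (by norm_num) (by norm_num) hk
  refine lt_of_le_of_lt (abs_dyadicAvg_sub_le hf hl fun y hy => ?_) (half_lt_self hε)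
  refine (hfδ y ⟨(dyadicPoint_mem_Icc hl.le).1.trans hy.1,
    hy.2.trans (dyadicPoint_mem_Icc hl).2⟩ ?_).le
  rw [Real.dist_eq, abs_lt]
  constructor <;> linarith [hy.1, hy.2, hx_mem.1, hx_mem.2]

theorem lintegral_iSup_dyadicAvg_sq_le {ι : Type*} [Fintype ι] {f : ι → ℝ → ℝ} {g : ℕ → ℕ → ℝ}
    (hf : ∀ i, ContinuousOn (f i) (Icc 0 1)) (hf0 : ∀ i, ∫ x in (0 : ℝ)..1, f i x = 0)
    (hg : ∀ i k l, l < 2 ^ k → |dyadicIncrement (dyadicAvg (f i)) k l| ≤ g k l) {B : ℝ}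
    (hB : ∀ K, ∑ k ∈ Finset.range K, dyadicMean k (fun l => g k l ^ 2) ≤ B) (K : ℕ) :
    ∫⁻ x in Ico (0 : ℝ) 1, ENNReal.ofReal (⨆ i, dyadicAvg (f i) K ⌊2 ^ K * x⌋₊ ^ 2) ≤
      ENNReal.ofReal (maximalConst * Real.log (Fintype.card ι + 1) * B) := by
  rw [lintegral_ofReal_comp_floor K (F := fun l => ⨆ i, dyadicAvg (f i) K l ^ 2)
    fun l => Real.iSup_nonneg fun i => sq_nonneg _]
  have h_log : 0 ≤ Real.log (Fintype.card ι + 1) :=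
    Real.log_nonneg (le_add_of_nonneg_left (Nat.cast_nonneg _))
  refine ENNReal.ofReal_le_ofReal ((dyadicMean_iSup_sq_le
    (fun i => isDyadicMartingale_dyadicAvg (hf i)) (fun i => ?_) hg K).trans
      (mul_le_mul_of_nonneg_left (hB K) (mul_nonneg maximalConst_pos.le h_log)))
  simp [dyadicAvg, dyadicPoint, hf0 i]

theorem lintegral_iSup_sq_le {ι : Type*} [Fintype ι] {f : ι → ℝ → ℝ} {g : ℕ → ℕ → ℝ}
    (hf : ∀ i, ContinuousOn (f i) (Icc 0 1)) (hf0 : ∀ i, ∫ x in (0 : ℝ)..1, f i x = 0)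
    (hg : ∀ i k l, l < 2 ^ k → |dyadicIncrement (dyadicAvg (f i)) k l| ≤ g k l) {B : ℝ}
    (hB : ∀ K, ∑ k ∈ Finset.range K, dyadicMean k (fun l => g k l ^ 2) ≤ B) :
    ∫⁻ x in Ico (0 : ℝ) 1, ⨆ i, ENNReal.ofReal (f i x ^ 2) ≤
      ENNReal.ofReal (maximalConst * Real.log (Fintype.card ι + 1) * B) := by
  set F : ℕ → ℕ → ENNReal := fun K l => ENNReal.ofReal (⨆ i, dyadicAvg (f i) K l ^ 2)
  calc _ ≤ ∫⁻ x in Ico (0 : ℝ) 1, Filter.liminf (fun K => F K ⌊2 ^ K * x⌋₊) Filter.atTop := by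
        refine setLIntegral_mono' measurableSet_Ico fun x hx => iSup_le fun i => ?_
        rw [← (ENNReal.tendsto_ofReal ((tendsto_dyadicAvg (hf i) hx).pow 2)).liminf_eq]
        exact Filter.liminf_le_liminf (Filter.Eventually.of_forall fun K =>
          ENNReal.ofReal_le_ofReal (le_ciSup
            (f := fun i => dyadicAvg (f i) K ⌊2 ^ K * x⌋₊ ^ 2) (finite_range _).bddAbove i))
    _ ≤ Filter.liminf (fun K => ∫⁻ x in Ico (0 : ℝ) 1, F K ⌊2 ^ K * x⌋₊) Filter.atTop :=
        lintegral_liminf_le fun K => (measurable_from_nat (f := F K)).comp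
          (Nat.measurable_floor.comp (by fun_prop))
    _ ≤ _ := Filter.liminf_le_of_frequently_le'
        (Filter.Frequently.of_forall (lintegral_iSup_dyadicAvg_sq_le hf hf0 hg hB))

/-! ### Schur's test across two scales -/

theorem sq_sum_mul_le_weighted {κ : Type*} {t : Finset κ} {b d w : κ → ℝ}
    (hd : ∀ j ∈ t, 0 ≤ d j) (hw : ∀ j ∈ t, 0 < w j) :
    (∑ j ∈ t, b j * d j) ^ 2 ≤ (∑ j ∈ t, d j * w j) * ∑ j ∈ t, d j * (b j ^ 2 / w j) := by
  refine Finset.sum_sq_le_sum_mul_sum_of_sq_le_mul t (fun j hj => mul_nonneg (hd j hj) (hw j hj).le)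
    (fun j hj => mul_nonneg (hd j hj) (div_nonneg (sq_nonneg _) (hw j hj).le)) fun j hj => ?_
  have := (hw j hj).ne'
  exact le_of_eq (by field_simp)

theorem sum_dyadicMean_sq_le_of_schur {κ : Type*} {T : Finset κ} {d : ℕ → ℕ → κ → ℝ} {w : ℕ → ℝ}
    {w' : κ → ℝ} {C₁ C₂ : ℝ} {K : ℕ} (hd : ∀ k l, ∀ j ∈ T, 0 ≤ d k l j) (hC₁ : 0 ≤ C₁)
    (hw' : ∀ j ∈ T, 0 < w' j)
    (hrow : ∀ k l, l < 2 ^ k → ∑ j ∈ T, d k l j * w' j ≤ C₁ * w k)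
    (hcol : ∀ j ∈ T, ∑ k ∈ Finset.range K, w k * dyadicMean k (fun l => d k l j) ≤ C₂ * w' j)
    (b : κ → ℝ) :
    ∑ k ∈ Finset.range K, dyadicMean k (fun l => (∑ j ∈ T, b j * d k l j) ^ 2) ≤
      C₁ * C₂ * ∑ j ∈ T, b j ^ 2 := by
  have h_div : ∀ j ∈ T, 0 ≤ b j ^ 2 / w' j := fun j hj => div_nonneg (sq_nonneg _) (hw' j hj).le
  have h_level : ∀ k, dyadicMean k (fun l => (∑ j ∈ T, b j * d k l j) ^ 2) ≤
      C₁ * w k * ∑ j ∈ T, b j ^ 2 / w' j * dyadicMean k (fun l => d k l j) := by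
    intro k
    simp only [← dyadicMean_const_mul, ← dyadicMean_sum]
    refine dyadicMean_mono fun l hl => ?_
    simp only [mul_comm (b _ ^ 2 / w' _)]
    exact (sq_sum_mul_le_weighted (hd k l) hw').trans (mul_le_mul_of_nonneg_right (hrow k l hl)
      (Finset.sum_nonneg fun j hj => mul_nonneg (hd k l j hj) (h_div j hj)))
  calc _ ≤ ∑ k ∈ Finset.range K,
        C₁ * w k * ∑ j ∈ T, b j ^ 2 / w' j * dyadicMean k (fun l => d k l j) :=
        Finset.sum_le_sum fun k _ => h_level k
    _ = C₁ * ∑ j ∈ T, b j ^ 2 / w' j *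
        ∑ k ∈ Finset.range K, w k * dyadicMean k (fun l => d k l j) := by
        simp only [Finset.mul_sum]
        rw [Finset.sum_comm]
        exact Finset.sum_congr rfl fun j _ => Finset.sum_congr rfl fun k _ => by ring
    _ ≤ C₁ * ∑ j ∈ T, b j ^ 2 / w' j * (C₂ * w' j) := by
        gcongr with j hj
        · exact h_div j hj
        · exact hcol j hj
    _ = C₁ * C₂ * ∑ j ∈ T, b j ^ 2 := by
        rw [mul_assoc, Finset.mul_sum T _ C₂]
        congr 1
        refine Finset.sum_congr rfl fun j hj => ?_
        have := (hw' j hj).ne'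
        field_simp

section TwoScale

variable {τ : ℝ}

theorem sum_pow_comp_le_of_injOn (hτ0 : 0 ≤ τ) (hτ1 : τ < 1) {ι : Type*} {s : Finset ι} {f : ι → ℕ}
    (hf : InjOn f s) : ∑ i ∈ s, τ ^ f i ≤ (1 - τ)⁻¹ := by
  rw [← Finset.sum_image (f := fun n => τ ^ n) hf, ← tsum_geometric_of_lt_one hτ0 hτ1]
  exact (summable_geometric_of_lt_one hτ0 hτ1).sum_le_tsum _ fun n _ => pow_nonneg hτ0 n

theorem sum_pow_dist_le (hτ0 : 0 ≤ τ) (hτ1 : τ < 1) (s : Finset ℕ) (k : ℕ) :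
    ∑ m ∈ s, τ ^ Nat.dist m k ≤ 2 / (1 - τ) := by
  rw [← Finset.sum_filter_add_sum_filter_not s (k ≤ ·), div_eq_mul_inv, two_mul]
  refine add_le_add (sum_pow_comp_le_of_injOn hτ0 hτ1 fun m hm m' hm' h => ?_)
    (sum_pow_comp_le_of_injOn hτ0 hτ1 fun m hm m' hm' h => ?_) <;>
  · simp only [Finset.coe_filter, mem_ofPred_eq, Nat.dist] at hm hm' h
    omega

theorem pow_two_mul_sub_mul_inv_pow (hτ : τ ≠ 0) (m k : ℕ) :
    τ ^ (2 * (m - k)) * (τ ^ m)⁻¹ = (τ ^ k)⁻¹ * τ ^ Nat.dist m k := by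
  rw [mul_inv_eq_iff_eq_mul₀ (pow_ne_zero m hτ), mul_assoc, ← pow_add,
    eq_inv_mul_iff_mul_eq₀ (pow_ne_zero k hτ), ← pow_add]
  congr 1
  unfold Nat.dist
  omega

theorem sum_mul_level_weight_le {κ : Type*} {T : Finset κ} {lev : κ → ℕ} {σ : ℕ → ℝ} {e : κ → ℝ}
    {R : ℝ} (hτ0 : 0 < τ) (hτ1 : τ < 1) (hσ : ∀ m, 0 < σ m) (hR : 0 ≤ R) (k : ℕ)
    (he : ∀ m, ∑ j ∈ T with lev j = m, e j ≤ R * σ m * τ ^ (2 * (m - k))) :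
    ∑ j ∈ T, e j * ((σ (lev j))⁻¹ * (τ ^ lev j)⁻¹) ≤ R * (2 / (1 - τ)) * (τ ^ k)⁻¹ := by
  rw [← Finset.sum_fiberwise_of_maps_to (t := T.image lev) fun j => Finset.mem_image_of_mem lev]
  calc _ ≤ ∑ m ∈ T.image lev, R * (τ ^ k)⁻¹ * τ ^ Nat.dist m k := by
        refine Finset.sum_le_sum fun m _ => ?_
        rw [Finset.sum_congr rfl fun j hj => by rw [(Finset.mem_filter.1 hj).2], ← Finset.sum_mul,
          mul_assoc R, ← pow_two_mul_sub_mul_inv_pow hτ0.ne']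
        have := hσ m
        refine (mul_le_mul_of_nonneg_right (he m) (by positivity)).trans_eq ?_
        field_simp
    _ ≤ R * (τ ^ k)⁻¹ * (2 / (1 - τ)) := by
        rw [← Finset.mul_sum]
        gcongr
        exact sum_pow_dist_le hτ0.le hτ1 _ k
    _ = _ := by ring

theorem sum_inv_pow_mul_le {e : ℕ → ℝ} {q : ℝ} (hτ0 : 0 < τ) (hτ1 : τ < 1) (hq : 0 ≤ q) {m : ℕ}
    (he : ∀ k, e k ≤ q * τ ^ (2 * (k - m))) (s : Finset ℕ) :
    ∑ k ∈ s, (τ ^ k)⁻¹ * e k ≤ 2 / (1 - τ) * (q * (τ ^ m)⁻¹) := by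
  calc _ ≤ ∑ k ∈ s, q * (τ ^ m)⁻¹ * τ ^ Nat.dist k m := by
        refine Finset.sum_le_sum fun k _ => ?_
        rw [mul_assoc q, ← pow_two_mul_sub_mul_inv_pow hτ0.ne']
        refine (mul_le_mul_of_nonneg_left (he k) (by positivity)).trans_eq ?_
        ring
    _ ≤ q * (τ ^ m)⁻¹ * (2 / (1 - τ)) := by
        rw [← Finset.mul_sum]
        gcongr
        exact sum_pow_dist_le hτ0.le hτ1 _ _
    _ = _ := mul_comm _ _

-- The Schur weights are `τ⁻ᵏ` at the dyadic level `k` and `(σ m τᵐ)⁻¹` at the level `m` of `j`.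
theorem sum_dyadicMean_sq_le_of_two_scale {κ : Type*} {T : Finset κ} {lev : κ → ℕ} {σ : ℕ → ℝ}
    {d : ℕ → ℕ → κ → ℝ} {R Q : ℝ} (hτ0 : 0 < τ) (hτ1 : τ < 1) (hσ : ∀ m, 0 < σ m) (hR : 0 ≤ R)
    (hQ : 0 ≤ Q) (hd : ∀ k l, ∀ j ∈ T, 0 ≤ d k l j)
    (hrow : ∀ k l m, l < 2 ^ k → ∑ j ∈ T with lev j = m, d k l j ≤ R * σ m * τ ^ (2 * (m - k)))
    (hcol : ∀ k, ∀ j ∈ T,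
      dyadicMean k (fun l => d k l j) ≤ Q * (σ (lev j))⁻¹ * τ ^ (2 * (k - lev j)))
    (b : κ → ℝ) (K : ℕ) :
    ∑ k ∈ Finset.range K, dyadicMean k (fun l => (∑ j ∈ T, b j * d k l j) ^ 2) ≤
      R * Q * (2 / (1 - τ)) ^ 2 * ∑ j ∈ T, b j ^ 2 := by
  have hS : 0 ≤ 2 / (1 - τ) := div_nonneg zero_le_two (by linarith)
  refine (sum_dyadicMean_sq_le_of_schur hd (mul_nonneg hR hS) (C₂ := 2 / (1 - τ) * Q)
    (fun j _ => mul_pos (inv_pos.2 (hσ (lev j))) (by positivity))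
    (fun k l hl => sum_mul_level_weight_le hτ0 hτ1 hσ hR k fun m => hrow k l m hl)
    (fun j hj => ?_) b).trans_eq (by ring)
  have hσj := hσ (lev j)
  exact (sum_inv_pow_mul_le hτ0 hτ1 (by positivity) (fun k => hcol k j hj) _).trans_eq (by ring)

end TwoScale

/-! ### Bumps and their dyadic differences -/

theorem xi_pos (δ x : ℝ) : 0 < xi δ x := by unfold xi; positivity

theorem xi_neg (δ x : ℝ) : xi δ (-x) = xi δ x := by rw [xi, xi, abs_neg]

theorem continuous_xi (δ : ℝ) : Continuous (xi δ) :=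
  Continuous.rpow_const (by fun_prop) fun x => Or.inl (by positivity)

theorem xi_le_xi {δ x y : ℝ} (hδ : -1 ≤ δ) (h : |x| ≤ |y|) : xi δ y ≤ xi δ x :=
  Real.rpow_le_rpow_of_nonpos (by positivity) (by linarith) (by linarith)

theorem xi_anti_exponent {δ η : ℝ} (h : η ≤ δ) (x : ℝ) : xi δ x ≤ xi η x :=
  Real.rpow_le_rpow_of_exponent_le (le_add_of_nonneg_right (abs_nonneg x)) (by linarith)

section LatticeSums

variable {δ : ℝ}

theorem summable_xi_int (hδ : 0 < δ) : Summable fun i : ℤ => xi δ i := by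
  have h_abs := Real.summable_abs_int_rpow (b := 1 + δ) (by linarith)
  have h_zero : Summable fun i : ℤ => if i = 0 then (1 : ℝ) else 0 :=
    summable_of_ne_finset_zero (s := {0}) fun i hi => by simpa using hi
  refine (h_abs.add h_zero).of_nonneg_of_le (fun i => (xi_pos δ i).le) fun i => ?_
  rcases eq_or_ne i 0 with rfl | hi
  · simp [xi, Real.zero_rpow (by linarith : -δ + -1 ≠ 0)]
  · have : 0 < |(i : ℝ)| := by positivity
    simp only [hi, if_false, add_zero]
    exact Real.rpow_le_rpow_of_nonpos this (by linarith) (by linarith)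

theorem xi_sub_le_xi_floor_sub (hδ : -1 ≤ δ) (y : ℝ) (i : ℤ) :
    xi δ (y - i) ≤ 2 ^ (1 + δ) * xi δ (⌊y⌋ - i : ℤ) := by
  have h_floor : |((⌊y⌋ - i : ℤ) : ℝ)| ≤ |y - i| + 1 := by
    push_cast
    calc |(⌊y⌋ : ℝ) - i| = |y - i - Int.fract y| := by rw [Int.fract]; ring_nf
      _ ≤ |y - i| + |Int.fract y| := abs_sub _ _
      _ ≤ _ := by rw [Int.abs_fract]; gcongr; exact (Int.fract_lt_one y).le
  calc xi δ (y - i) ≤ ((1 + |((⌊y⌋ - i : ℤ) : ℝ)|) / 2) ^ (-(1 + δ)) :=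
        Real.rpow_le_rpow_of_nonpos (by positivity) (by linarith [abs_nonneg (y - i)])
          (by linarith)
    _ = _ := by
        rw [Real.div_rpow (by positivity) two_pos.le, Real.rpow_neg two_pos.le, div_inv_eq_mul,
          mul_comm, xi]

theorem exists_sum_xi_sub_int_le (hδ : 0 < δ) :
    ∃ Z : ℝ, 0 < Z ∧ ∀ (s : Finset ℤ) (y : ℝ), ∑ i ∈ s, xi δ (y - i) ≤ Z := by
  have h_sum := summable_xi_int hδ
  have h_pos : 0 < ∑' i : ℤ, xi δ i := h_sum.tsum_pos (fun i => (xi_pos δ i).le) 0 (xi_pos δ _)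
  refine ⟨2 ^ (1 + δ) * ∑' i : ℤ, xi δ i, by positivity, fun s y => ?_⟩
  calc ∑ i ∈ s, xi δ (y - i) ≤ 2 ^ (1 + δ) * ∑ i ∈ s, xi δ (⌊y⌋ - i : ℤ) := by
        rw [Finset.mul_sum]
        exact Finset.sum_le_sum fun i _ => xi_sub_le_xi_floor_sub (by linarith) y i
    _ ≤ 2 ^ (1 + δ) * ∑' i : ℤ, xi δ i := by
        rw [← (Equiv.subLeft ⌊y⌋).tsum_eq]
        gcongr
        exact ((Equiv.subLeft ⌊y⌋).summable_iff.2 h_sum).sum_le_tsum s fun i _ => (xi_pos δ _).le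

theorem exists_sum_xi_lattice_le (κ : Type*) (hδ : 0 < δ) :
    ∃ Z : ℝ, 0 < Z ∧ ∀ (s : Finset κ) (e : κ → ℤ), InjOn e s → ∀ y : ℝ,
      ∑ j ∈ s, xi δ (y - e j) ≤ Z := by
  classical
  obtain ⟨Z, hZ0, hZ⟩ := exists_sum_xi_sub_int_le hδ
  refine ⟨Z, hZ0, fun s e he y => ?_⟩
  rw [← Finset.sum_image (f := fun i : ℤ => xi δ (y - i)) he]
  exact hZ _ y

end LatticeSums

section Integrals

variable {η : ℝ}

theorem hasDerivAt_tail {y : ℝ} (hη : η ≠ 0) (hy : 0 ≤ y) :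
    HasDerivAt (fun y => -(η⁻¹ * (1 + y) ^ (-η))) (xi η y) y := by
  have h := ((((hasDerivAt_id y).const_add 1).rpow_const (p := -η)
    (Or.inl (by simp only [id]; positivity))).const_mul η⁻¹).neg
  refine h.congr_deriv ?_
  rw [xi, abs_of_nonneg hy, show -η - 1 = -(1 + η) by ring]
  simp only [id]
  field_simp

theorem integral_xi_le_tail {p q : ℝ} (hη : 0 < η) (hp : 0 ≤ p) (hpq : p ≤ q) :
    ∫ y in p..q, xi η y ≤ η⁻¹ * (1 + p) ^ (-η) := by
  rw [intervalIntegral.integral_eq_sub_of_hasDerivAt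
    (fun y hy => hasDerivAt_tail hη.ne' (hp.trans (uIcc_of_le hpq ▸ hy).1))
    ((continuous_xi η).intervalIntegrable p q)]
  have : 0 ≤ η⁻¹ * (1 + q) ^ (-η) := by
    have := hp.trans hpq
    positivity
  linarith

theorem integral_xi_neg (p q : ℝ) : ∫ y in -q..-p, xi η y = ∫ y in p..q, xi η y := by
  rw [← intervalIntegral.integral_comp_neg]
  simp only [xi_neg]

theorem abs_integral_zero_xi_le (hη : 0 < η) (q : ℝ) : |∫ y in (0 : ℝ)..q, xi η y| ≤ η⁻¹ := by
  wlog hq : 0 ≤ q generalizing q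
  · have h := this (-q) (by linarith)
    rwa [← neg_zero, intervalIntegral.integral_symm, abs_neg, integral_xi_neg] at h
  rw [abs_of_nonneg (intervalIntegral.integral_nonneg hq fun y _ => (xi_pos η y).le)]
  simpa using integral_xi_le_tail hη le_rfl hq

theorem integral_xi_le (hη : 0 < η) (p q : ℝ) : ∫ y in p..q, xi η y ≤ 2 / η := by
  have h_int := fun q : ℝ => (continuous_xi η).intervalIntegrable (μ := volume) 0 q
  rw [← intervalIntegral.integral_interval_sub_left (h_int q) (h_int p), div_eq_mul_inv]
  linarith [(abs_le.1 (abs_integral_zero_xi_le hη q)).2,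
    (abs_le.1 (abs_integral_zero_xi_le hη p)).1]

theorem rpow_neg_le_mul_xi_half {L y : ℝ} (hη0 : 0 ≤ η) (hη1 : η ≤ 1) (hL : 0 ≤ L)
    (hy : 1 + |y| ≤ 2 * L) :
    (1 + |y|) ^ (-η) ≤ 2 * L ^ (1 - η / 2) * xi (η / 2) y := by
  have hX : 0 < 1 + |y| := by positivity
  calc (1 + |y|) ^ (-η) = (1 + |y|) ^ (1 - η / 2) * xi (η / 2) y := by
        rw [xi, ← Real.rpow_add hX]; congr 1; ring
    _ ≤ (2 * L) ^ (1 - η / 2) * xi (η / 2) y := by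
        have := (xi_pos (η / 2) y).le
        gcongr
        linarith
    _ ≤ 2 * L ^ (1 - η / 2) * xi (η / 2) y := by
        have := (xi_pos (η / 2) y).le
        rw [Real.mul_rpow two_pos.le hL]
        gcongr
        exact (Real.rpow_le_rpow_of_exponent_le one_le_two (by linarith)).trans_eq
          (Real.rpow_one 2)

-- The tail bound `(1 + p)^{-η}` and the length bound `L (1 + p)^{-(1+η)}`, interpolated.
theorem integral_xi_le_of_length_le {L p q : ℝ} (hη0 : 0 < η) (hη1 : η ≤ 1) (hL : 1 ≤ L)
    (hp : 0 ≤ p) (hpq : p ≤ q) (hqL : q - p ≤ L) :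
    ∫ y in p..q, xi η y ≤ 2 / η * L ^ (1 - η / 2) * xi (η / 2) p := by
  have hL0 : 0 < L := by linarith
  have h_xi := xi_pos (η / 2) p
  rcases le_total (1 + p) (2 * L) with hpL | hpL
  · have h := rpow_neg_le_mul_xi_half hη0.le hη1 hL0.le (y := p) (by rwa [abs_of_nonneg hp])
    rw [abs_of_nonneg hp] at h
    calc ∫ y in p..q, xi η y ≤ η⁻¹ * (1 + p) ^ (-η) := integral_xi_le_tail hη0 hp hpq
      _ ≤ η⁻¹ * (2 * L ^ (1 - η / 2) * xi (η / 2) p) := by gcongr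
      _ = _ := by ring
  · have h_length : ∫ y in p..q, xi η y ≤ L * xi η p := by
      refine (intervalIntegral.integral_mono_on (g := fun _ => xi η p) hpq
        ((continuous_xi η).intervalIntegrable p q) intervalIntegrable_const fun y hy =>
          xi_le_xi (by linarith) (abs_le_abs_of_nonneg hp hy.1)).trans ?_
      rw [intervalIntegral.integral_const, smul_eq_mul]
      exact mul_le_mul_of_nonneg_right hqL (xi_pos η p).le
    have h_split : xi η p ≤ L ^ (-(η / 2)) * xi (η / 2) p := by
      rw [xi, xi, abs_of_nonneg hp, show -(1 + η) = -(η / 2) + -(1 + η / 2) by ring,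
        Real.rpow_add (by positivity)]
      gcongr ?_ * _
      exact Real.rpow_le_rpow_of_nonpos hL0 (by linarith) (by linarith)
    calc ∫ y in p..q, xi η y ≤ L * (L ^ (-(η / 2)) * xi (η / 2) p) :=
          h_length.trans (by gcongr)
      _ = 1 * L ^ (1 - η / 2) * xi (η / 2) p := by
          rw [sub_eq_add_neg, Real.rpow_add hL0, Real.rpow_one]; ring
      _ ≤ 2 / η * L ^ (1 - η / 2) * xi (η / 2) p := by
          gcongr
          rw [le_div_iff₀ hη0]
          linarith

theorem integral_xi_comp_mul_sub {u : ℝ} (hu : u ≠ 0) (t p q : ℝ) :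
    ∫ x in p..q, xi η (u * (x - t)) = u⁻¹ * ∫ y in u * (p - t)..u * (q - t), xi η y := by
  simp only [mul_sub]
  rw [intervalIntegral.integral_comp_mul_sub _ hu, smul_eq_mul]

end Integrals

/-- A bump at the point `t` and the scale `u⁻¹`, of height `A`: a function on `[0, 1]` of mean zero
which decays like `ξ` and is Hölder continuous away from `t`. A single exponent `η` measures both
the decay and the smoothness. -/
structure IsBump (η A u t : ℝ) (φ : ℝ → ℝ) : Prop where
  continuousOn : ContinuousOn φ (Icc 0 1)
  integral_eq_zero : ∫ x in (0 : ℝ)..1, φ x = 0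
  decay : ∀ x ∈ Icc (0 : ℝ) 1, |φ x| ≤ A * xi η (u * (x - t))
  holder : ∀ x ∈ Icc (0 : ℝ) 1, ∀ y ∈ Icc (0 : ℝ) 1, |x - y| ≤ u⁻¹ →
    |φ x - φ y| ≤ A * (u * |x - y|) ^ η * xi η (u * (x - t))

theorem continuous_xi_comp (η u t : ℝ) : Continuous fun x => xi η (u * (x - t)) :=
  (continuous_xi η).comp (by fun_prop)

namespace IsBump

variable {η A u t : ℝ} {φ : ℝ → ℝ}

theorem nonneg (hφ : IsBump η A u t φ) : 0 ≤ A :=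
  nonneg_of_mul_nonneg_left ((abs_nonneg _).trans (hφ.decay 0 (by simp))) (xi_pos _ _)

theorem intervalIntegrable (hφ : IsBump η A u t φ) {p q : ℝ} (hp : p ∈ Icc (0 : ℝ) 1)
    (hq : q ∈ Icc (0 : ℝ) 1) : IntervalIntegrable φ volume p q :=
  intervalIntegrable_of_continuousOn_Icc hφ.continuousOn hp hq

theorem abs_integral_le (hφ : IsBump η A u t φ) {p q : ℝ} (hp : p ∈ Icc (0 : ℝ) 1)
    (hq : q ∈ Icc (0 : ℝ) 1) (hpq : p ≤ q) :
    |∫ x in p..q, φ x| ≤ A * ∫ x in p..q, xi η (u * (x - t)) := by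
  rw [← intervalIntegral.integral_const_mul]
  exact intervalIntegral.norm_integral_le_of_norm_le (f := φ) hpq
    (.of_forall fun x hx => hφ.decay x ⟨hp.1.trans hx.1.le, hx.2.trans hq.2⟩)
    (((continuous_xi_comp η u t).intervalIntegrable p q).const_mul A)

theorem abs_integral_le_rescaled (hφ : IsBump η A u t φ) (hu : u ≠ 0) {p q : ℝ}
    (hp : p ∈ Icc (0 : ℝ) 1) (hq : q ∈ Icc (0 : ℝ) 1) (hpq : p ≤ q) :
    |∫ x in p..q, φ x| ≤ A / u * ∫ y in u * (p - t)..u * (q - t), xi η y := by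
  rw [div_mul_eq_mul_div, mul_div_assoc, div_eq_inv_mul, ← integral_xi_comp_mul_sub hu]
  exact hφ.abs_integral_le hp hq hpq

-- Mean zero turns the integral across the center into two tails.
theorem abs_integral_across_center_le (hφ : IsBump η A u t φ) (hη : 0 < η) (hu : 0 < u) {p q : ℝ}
    (hp : p ∈ Icc (0 : ℝ) 1) (hq : q ∈ Icc (0 : ℝ) 1) (hpt : p ≤ t) (htq : t ≤ q) :
    |∫ x in p..q, φ x| ≤
      A / u * (η⁻¹ * (1 + |u * (p - t)|) ^ (-η) + η⁻¹ * (1 + |u * (q - t)|) ^ (-η)) := by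
  have h0 : (0 : ℝ) ∈ Icc (0 : ℝ) 1 := by simp
  have h1 : (1 : ℝ) ∈ Icc (0 : ℝ) 1 := by simp
  have hAu : 0 ≤ A / u := div_nonneg hφ.nonneg hu.le
  have h_split : ∫ x in p..q, φ x = -((∫ x in (0 : ℝ)..p, φ x) + ∫ x in q..1, φ x) := by
    have h_left := intervalIntegral.integral_add_adjacent_intervals
      (hφ.intervalIntegrable h0 hp) (hφ.intervalIntegrable hp hq)
    have h_right := intervalIntegral.integral_add_adjacent_intervals
      (hφ.intervalIntegrable h0 hq) (hφ.intervalIntegrable hq h1)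
    linarith [hφ.integral_eq_zero]
  have h_left : |∫ x in (0 : ℝ)..p, φ x| ≤ A / u * (η⁻¹ * (1 + |u * (p - t)|) ^ (-η)) := by
    refine (hφ.abs_integral_le_rescaled hu.ne' h0 hp hp.1).trans ?_
    rw [← integral_xi_neg, abs_of_nonpos (mul_nonpos_of_nonneg_of_nonpos hu.le (by linarith))]
    gcongr
    refine integral_xi_le_tail hη (by nlinarith) (by nlinarith [hp.1])
  have h_right : |∫ x in q..1, φ x| ≤ A / u * (η⁻¹ * (1 + |u * (q - t)|) ^ (-η)) := by
    refine (hφ.abs_integral_le_rescaled hu.ne' hq h1 hq.2).trans ?_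
    rw [abs_of_nonneg (mul_nonneg hu.le (by linarith))]
    gcongr
    exact integral_xi_le_tail hη (by nlinarith) (by nlinarith [hq.2])
  rw [h_split, abs_neg, mul_add]
  exact (abs_add_le _ _).trans (add_le_add h_left h_right)

theorem abs_integral_le_endpoints (hφ : IsBump η A u t φ) (hη0 : 0 < η) (hη1 : η ≤ 1)
    (hu : 0 < u) {p q L : ℝ} (hp : p ∈ Icc (0 : ℝ) 1) (hq : q ∈ Icc (0 : ℝ) 1) (hpq : p ≤ q)
    (hL : 1 ≤ L) (hpqL : u * (q - p) ≤ L) :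
    |∫ x in p..q, φ x| ≤ A / u * (2 / η * L ^ (1 - η / 2)) *
      (xi (η / 2) (u * (p - t)) + xi (η / 2) (u * (q - t))) := by
  have hAu : 0 ≤ A / u := div_nonneg hφ.nonneg hu.le
  have hW : 0 ≤ 2 / η * L ^ (1 - η / 2) := by positivity
  have h_xi_p := xi_pos (η / 2) (u * (p - t))
  have h_xi_q := xi_pos (η / 2) (u * (q - t))
  have h_scaled : u * (p - t) ≤ u * (q - t) := by gcongr
  rw [mul_assoc]
  rcases le_total t p with htp | hpt
  · refine (hφ.abs_integral_le_rescaled hu.ne' hp hq hpq).trans ?_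
    gcongr
    refine (integral_xi_le_of_length_le hη0 hη1 hL (by nlinarith) h_scaled (by linarith)).trans ?_
    gcongr
    linarith
  rcases le_total q t with hqt | htq
  · refine (hφ.abs_integral_le_rescaled hu.ne' hp hq hpq).trans ?_
    rw [← integral_xi_neg]
    gcongr
    refine (integral_xi_le_of_length_le hη0 hη1 hL (by nlinarith) (by linarith)
      (by linarith)).trans ?_
    rw [xi_neg]
    gcongr
    linarith
  · have h_tail : ∀ y, |y| ≤ L → η⁻¹ * (1 + |y|) ^ (-η) ≤
        2 / η * L ^ (1 - η / 2) * xi (η / 2) y := fun y hy => by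
      refine (mul_le_mul_of_nonneg_left (rpow_neg_le_mul_xi_half hη0.le hη1 (by linarith)
        (by linarith : 1 + |y| ≤ 2 * L)) (inv_nonneg.2 hη0.le)).trans_eq ?_
      ring
    refine (hφ.abs_integral_across_center_le hη0 hu hp hq hpt htq).trans ?_
    rw [mul_add (2 / η * _)]
    refine mul_le_mul_of_nonneg_left (add_le_add (h_tail _ ?_) (h_tail _ ?_)) hAu <;>
      exact abs_le.2 ⟨by nlinarith, by nlinarith⟩

theorem abs_integral_sub_integral_le (hφ : IsBump η A u t φ) {p r q : ℝ}
    (hp : p ∈ Icc (0 : ℝ) 1) (hr : r ∈ Icc (0 : ℝ) 1) (hq : q ∈ Icc (0 : ℝ) 1) (hpr : p ≤ r)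
    (hrq : r ≤ q) :
    |(∫ x in p..r, φ x) - ∫ x in r..q, φ x| ≤ A * ∫ x in p..q, xi η (u * (x - t)) := by
  have h_int := fun a b => (continuous_xi_comp η u t).intervalIntegrable (μ := volume) a b
  rw [← intervalIntegral.integral_add_adjacent_intervals (h_int p r) (h_int r q), mul_add]
  exact (abs_sub _ _).trans
    (add_le_add (hφ.abs_integral_le hp hr hpr) (hφ.abs_integral_le hr hq hrq))

theorem abs_integral_sub_shifted_integral_le (hφ : IsBump η A u t φ) (hu : 0 < u)
    {p h : ℝ} (hh : 0 ≤ h) (hp : p ∈ Icc (0 : ℝ) 1) (hq : p + h + h ∈ Icc (0 : ℝ) 1)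
    (huh : h ≤ u⁻¹) :
    |(∫ x in p..p + h, φ x) - ∫ x in p + h..p + h + h, φ x| ≤
      A * (u * h) ^ η * ∫ x in p..p + h + h, xi η (u * (x - t)) := by
  have hA := hφ.nonneg
  have hr : p + h ∈ Icc (0 : ℝ) 1 := ⟨by linarith [hp.1], by linarith [hq.2]⟩
  have h_int := fun a b => (continuous_xi_comp η u t).intervalIntegrable (μ := volume) a b
  have h_shift : IntervalIntegrable (fun x => φ (x + h)) volume p (p + h) := by
    simpa using (hφ.intervalIntegrable hr hq).comp_add_right h
  rw [← intervalIntegral.integral_comp_add_right φ h,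
    ← intervalIntegral.integral_sub (hφ.intervalIntegrable hp hr) h_shift]
  calc _ ≤ ∫ x in p..p + h, A * (u * h) ^ η * xi η (u * (x - t)) := by
        refine intervalIntegral.norm_integral_le_of_norm_le
          (f := fun x => φ x - φ (x + h)) (by linarith) (.of_forall fun x hx => ?_)
          ((h_int _ _).const_mul _)
        have h_dist : |x - (x + h)| = h := by rw [sub_add_cancel_left, abs_neg, abs_of_nonneg hh]
        have := hφ.holder x ⟨hp.1.trans hx.1.le, hx.2.trans hr.2⟩ (x + h)
          ⟨by linarith [hp.1, hx.1], by linarith [hq.2, hx.2]⟩ (h_dist.trans_le huh)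
        rwa [h_dist] at this
    _ ≤ _ := by
        rw [intervalIntegral.integral_const_mul]
        gcongr
        exact intervalIntegral.integral_mono_interval le_rfl (by linarith) (by linarith)
          (.of_forall fun x => (xi_pos _ _).le) (h_int _ _)

end IsBump

theorem dyadicMean_dyadicAvg {f : ℝ → ℝ} (hf : Continuous f) (k : ℕ) :
    dyadicMean k (dyadicAvg f k) = ∫ x in (0 : ℝ)..1, f x := by
  have hk : (2 : ℝ) ^ k ≠ 0 := by positivity
  simp only [dyadicMean, dyadicAvg]
  rw [← Finset.mul_sum, mul_div_cancel_left₀ _ hk,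
    intervalIntegral.sum_integral_adjacent_intervals fun l _ => hf.intervalIntegrable _ _]
  simp [dyadicPoint]

theorem dyadicAvg_le_of_le {f : ℝ → ℝ} (hf : Continuous f) {C : ℝ} (hC : ∀ x, f x ≤ C) (k l : ℕ) :
    dyadicAvg f k l ≤ C := by
  have h_mono := intervalIntegral.integral_mono (dyadicPoint_le_succ k l)
    (hf.intervalIntegrable _ _) intervalIntegrable_const hC (μ := volume)
  rw [intervalIntegral.integral_const, dyadicPoint_succ_sub, smul_eq_mul,
    ← div_eq_inv_mul, le_div_iff₀' (by positivity)] at h_mono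
  exact h_mono

theorem dyadicAvg_nonneg {f : ℝ → ℝ} (hf : ∀ x, 0 ≤ f x) (k l : ℕ) : 0 ≤ dyadicAvg f k l :=
  mul_nonneg (by positivity)
    (intervalIntegral.integral_nonneg (dyadicPoint_le_succ k l) fun x _ => hf x)

theorem two_pow_div_two_pow_rpow_le {η : ℝ} {m k : ℕ} (hmk : m ≤ k) (hη : 0 ≤ η) :
    ((2 : ℝ) ^ m * ((2 : ℝ) ^ (k + 1))⁻¹) ^ η ≤ ((2 : ℝ) ^ (-η)) ^ (k - m) := by
  have h_base : (2 : ℝ) ^ m * ((2 : ℝ) ^ (k + 1))⁻¹ ≤ (2⁻¹) ^ (k - m) := by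
    obtain ⟨i, rfl⟩ := Nat.exists_eq_add_of_le hmk
    rw [Nat.add_sub_cancel_left, pow_succ, pow_add, inv_pow]
    field_simp
    norm_num
  refine (Real.rpow_le_rpow (by positivity) h_base hη).trans_eq ?_
  rw [Real.rpow_neg two_pos.le, ← Real.inv_rpow two_pos.le]
  exact (Real.rpow_pow_comm (by norm_num) η (k - m)).symm

theorem IsBump.abs_dyadicIncrement_le {η A t : ℝ} {m k l : ℕ} {φ : ℝ → ℝ}
    (hφ : IsBump η A (2 ^ m) t φ) (hη : 0 ≤ η) (hl : l < 2 ^ k) :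
    |dyadicIncrement (dyadicAvg φ) k l| ≤
      A * ((2 : ℝ) ^ (-η)) ^ (k - m) * dyadicAvg (fun x => xi η (2 ^ m * (x - t))) k l := by
  have hA := hφ.nonneg
  have hpow : 2 ^ (k + 1) = 2 * 2 ^ k := pow_succ' 2 k
  have hp := dyadicPoint_mem_Icc (k := k + 1) (l := 2 * l) (by omega)
  have hr := dyadicPoint_mem_Icc (k := k + 1) (l := 2 * l + 1) (by omega)
  have hq := dyadicPoint_mem_Icc (k := k + 1) (l := 2 * l + 1 + 1) (by omega)
  rw [dyadicIncrement_dyadicAvg, abs_mul, abs_of_pos (by positivity : (0 : ℝ) < 2 ^ k), dyadicAvg,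
    ← dyadicPoint_succ_two_mul k l, ← dyadicPoint_succ_two_mul k (l + 1),
    show 2 * (l + 1) = 2 * l + 1 + 1 by ring]
  refine (mul_le_mul_of_nonneg_left ?_ (by positivity)).trans_eq (mul_left_comm _ _ _)
  rcases le_total k m with hkm | hmk
  · rw [Nat.sub_eq_zero_of_le hkm, pow_zero, mul_one]
    exact hφ.abs_integral_sub_integral_le hp hr hq (dyadicPoint_le_succ _ _)
      (dyadicPoint_le_succ _ _)
  · have h_mid := eq_add_of_sub_eq' (dyadicPoint_succ_sub (k + 1) (2 * l))
    have h_right := eq_add_of_sub_eq' (dyadicPoint_succ_sub (k + 1) (2 * l + 1))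
    rw [h_mid] at h_right
    have h_scale : ((2 : ℝ) ^ (k + 1))⁻¹ ≤ (2 ^ m)⁻¹ := by
      gcongr
      · exact one_le_two
      · omega
    rw [h_right] at hq
    rw [h_mid, h_right]
    refine (hφ.abs_integral_sub_shifted_integral_le (by positivity) (by positivity) hp hq
      h_scale).trans ?_
    gcongr
    · exact intervalIntegral.integral_nonneg
        (by rw [add_assoc]; exact le_add_of_nonneg_right (by positivity)) fun x _ => (xi_pos _ _).le
    · exact two_pow_div_two_pow_rpow_le hmk hη

theorem IsBump.abs_dyadicIncrement_le_endpoints {η A t : ℝ} {m k l : ℕ} {φ : ℝ → ℝ}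
    (hφ : IsBump η A (2 ^ m) t φ) (hη0 : 0 < η) (hη1 : η ≤ 1) (hkm : k ≤ m) (hl : l < 2 ^ k) :
    |dyadicIncrement (dyadicAvg φ) k l| ≤ A * (2 / η * ((2 : ℝ) ^ (-(η / 2))) ^ (m - k)) *
      (xi (η / 2) (2 ^ m * (dyadicPoint (k + 1) (2 * l) - t)) +
        2 * xi (η / 2) (2 ^ m * (dyadicPoint (k + 1) (2 * l + 1) - t)) +
        xi (η / 2) (2 ^ m * (dyadicPoint (k + 1) (2 * l + 1 + 1) - t))) := by
  obtain ⟨i, rfl⟩ := Nat.exists_eq_add_of_le hkm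
  have hpow : 2 ^ (k + 1) = 2 * 2 ^ k := pow_succ' 2 k
  have h_mem := fun i (hi : 2 * l + i ≤ 2 ^ (k + 1)) => dyadicPoint_mem_Icc hi
  have h_length : ∀ n, (2 : ℝ) ^ (k + i) *
      (dyadicPoint (k + 1) (n + 1) - dyadicPoint (k + 1) n) ≤ 2 ^ i := fun n => by
    rw [dyadicPoint_succ_sub, pow_add, pow_succ]
    field_simp
    norm_num
  have h_half := fun n hp hq => hφ.abs_integral_le_endpoints hη0 hη1 (by positivity) hp hq
    (dyadicPoint_le_succ (k + 1) n) (one_le_pow₀ one_le_two) (h_length n)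
  have h_scale : (2 : ℝ) ^ k * (A / 2 ^ (k + i) * (2 / η * (2 ^ i) ^ (1 - η / 2))) =
      A * (2 / η * ((2 : ℝ) ^ (-(η / 2))) ^ i) := by
    rw [Real.rpow_pow_comm two_pos.le (-(η / 2)) i, sub_eq_add_neg,
      Real.rpow_add (by positivity), Real.rpow_one, pow_add]
    field_simp
  rw [dyadicIncrement_dyadicAvg, abs_mul, abs_of_pos (by positivity : (0 : ℝ) < 2 ^ k),
    Nat.add_sub_cancel_left, ← h_scale, mul_assoc (2 ^ k : ℝ)]
  gcongr
  refine (abs_sub _ _).trans ((add_le_add (h_half _ (h_mem 0 (by omega)) (h_mem 1 (by omega)))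
    (h_half _ (h_mem 1 (by omega)) (h_mem 2 (by omega)))).trans_eq ?_)
  rw [add_zero]
  ring

/-- A family of `L²`-normalized bumps, in which `φ j` lives at the scale `2 ^ (-lev j)` and is
centered at the point `e j / 2 ^ lev j`; distinct members of one level have distinct centers. -/
structure IsBumpFamily {κ : Type*} (η c : ℝ) (T : Finset κ) (lev : κ → ℕ) (e : κ → ℤ)
    (φ : κ → ℝ → ℝ) : Prop where
  isBump : ∀ j ∈ T, IsBump η (c * 2 ^ ((lev j : ℝ) / 2)) (2 ^ lev j) (e j / 2 ^ lev j) (φ j)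
  injOn : ∀ m, InjOn e {j ∈ T | lev j = m}

namespace IsBumpFamily

variable {κ : Type*} {η c : ℝ} {T : Finset κ} {lev : κ → ℕ} {e : κ → ℤ} {φ : κ → ℝ → ℝ}

theorem isBump_of_mem_level (hφ : IsBumpFamily η c T lev e φ) {m : ℕ} {j : κ}
    (hj : j ∈ T.filter fun j => lev j = m) :
    IsBump η (c * 2 ^ ((m : ℝ) / 2)) (2 ^ m) (e j / 2 ^ m) (φ j) := by
  obtain ⟨hjT, rfl⟩ := Finset.mem_filter.1 hj
  exact hφ.isBump j hjT

theorem sum_level_xi_le (hφ : IsBumpFamily η c T lev e φ) {δ Z : ℝ}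
    (hZ : ∀ (s : Finset κ) (e : κ → ℤ), InjOn e s → ∀ y : ℝ, ∑ j ∈ s, xi δ (y - e j) ≤ Z)
    (m : ℕ) (x : ℝ) : ∑ j ∈ T with lev j = m, xi δ (2 ^ m * (x - e j / 2 ^ m)) ≤ Z := by
  have hm : (2 : ℝ) ^ m ≠ 0 := by positivity
  simp only [mul_sub, mul_div_cancel₀ _ hm]
  exact hZ _ e (by simpa using hφ.injOn m) _

theorem sum_level_abs_dyadicIncrement_le_of_fine (hφ : IsBumpFamily η c T lev e φ) (hη : 0 ≤ η)
    (hc : 0 ≤ c) {Z : ℝ}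
    (hZ : ∀ (s : Finset κ) (e : κ → ℤ), InjOn e s → ∀ y : ℝ, ∑ j ∈ s, xi η (y - e j) ≤ Z)
    {k l : ℕ} (hl : l < 2 ^ k) (m : ℕ) :
    ∑ j ∈ T with lev j = m, |dyadicIncrement (dyadicAvg (φ j)) k l| ≤
      c * 2 ^ ((m : ℝ) / 2) * Z := by
  have h_rate : ((2 : ℝ) ^ (-η)) ^ (k - m) ≤ 1 :=
    pow_le_one₀ (by positivity) (Real.rpow_le_one_of_one_le_of_nonpos one_le_two (by linarith))
  calc _ ≤ ∑ j ∈ T with lev j = m, c * 2 ^ ((m : ℝ) / 2) *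
          (1 * dyadicAvg (fun x => xi η (2 ^ m * (x - e j / 2 ^ m))) k l) := by
        refine Finset.sum_le_sum fun j hj =>
          ((hφ.isBump_of_mem_level hj).abs_dyadicIncrement_le hη hl).trans ?_
        rw [mul_assoc]
        gcongr
        exact dyadicAvg_nonneg (fun x => (xi_pos _ _).le) k l
    _ = c * 2 ^ ((m : ℝ) / 2) *
          dyadicAvg (fun x =>
            ∑ j ∈ T with lev j = m, 1 * xi η (2 ^ m * (x - e j / 2 ^ m))) k l := by
        rw [dyadicAvg_sum (fun j _ => (continuous_xi_comp _ _ _).continuousOn) _ hl,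
          Finset.mul_sum]
    _ ≤ _ := by
        gcongr
        simp only [one_mul]
        exact dyadicAvg_le_of_le (continuous_finsetSum _ fun j _ => continuous_xi_comp _ _ _)
          (hφ.sum_level_xi_le hZ m) k l

theorem sum_level_abs_dyadicIncrement_le_of_coarse (hφ : IsBumpFamily η c T lev e φ) (hη0 : 0 < η)
    (hη1 : η ≤ 1) (hc : 0 ≤ c) {Z : ℝ}
    (hZ : ∀ (s : Finset κ) (e : κ → ℤ), InjOn e s → ∀ y : ℝ, ∑ j ∈ s, xi (η / 2) (y - e j) ≤ Z)
    {k l m : ℕ} (hl : l < 2 ^ k) (hkm : k ≤ m) :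
    ∑ j ∈ T with lev j = m, |dyadicIncrement (dyadicAvg (φ j)) k l| ≤
      8 * c / η * Z * 2 ^ ((m : ℝ) / 2) * ((2 : ℝ) ^ (-(η / 2))) ^ (m - k) := by
  set w : ℝ := c * 2 ^ ((m : ℝ) / 2) * (2 / η * ((2 : ℝ) ^ (-(η / 2))) ^ (m - k))
  set p := fun i => dyadicPoint (k + 1) (2 * l + i)
  have h_level := hφ.sum_level_xi_le hZ m
  calc _ ≤ ∑ j ∈ T with lev j = m, w * (xi (η / 2) (2 ^ m * (p 0 - e j / 2 ^ m)) +
          2 * xi (η / 2) (2 ^ m * (p 1 - e j / 2 ^ m)) +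
          xi (η / 2) (2 ^ m * (p 2 - e j / 2 ^ m))) :=
        Finset.sum_le_sum fun j hj =>
          (hφ.isBump_of_mem_level hj).abs_dyadicIncrement_le_endpoints hη0 hη1 hkm hl
    _ ≤ w * (Z + 2 * Z + Z) := by
        rw [← Finset.mul_sum, Finset.sum_add_distrib, Finset.sum_add_distrib, ← Finset.mul_sum]
        gcongr <;> exact h_level _
    _ = _ := by simp only [w]; ring

theorem dyadicMean_abs_dyadicIncrement_le (hφ : IsBumpFamily η c T lev e φ) (hη : 0 < η)
    (hc : 0 ≤ c) (k : ℕ) {j : κ} (hj : j ∈ T) :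
    dyadicMean k (fun l => |dyadicIncrement (dyadicAvg (φ j)) k l|) ≤
      2 * c / η * (2 ^ ((lev j : ℝ) / 2))⁻¹ * ((2 : ℝ) ^ (-η)) ^ (k - lev j) := by
  set m := lev j
  have hm : (2 : ℝ) ^ m = 2 ^ ((m : ℝ) / 2) * 2 ^ ((m : ℝ) / 2) := by
    rw [← Real.rpow_add two_pos, add_halves, Real.rpow_natCast]
  calc _ ≤ c * 2 ^ ((m : ℝ) / 2) * ((2 : ℝ) ^ (-η)) ^ (k - m) *
        ∫ x in (0 : ℝ)..1, xi η (2 ^ m * (x - e j / 2 ^ m)) := by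
        rw [← dyadicMean_dyadicAvg (continuous_xi_comp _ _ _) k, ← dyadicMean_const_mul]
        exact dyadicMean_mono fun l hl => (hφ.isBump j hj).abs_dyadicIncrement_le hη.le hl
    _ ≤ c * 2 ^ ((m : ℝ) / 2) * ((2 : ℝ) ^ (-η)) ^ (k - m) * ((2 ^ m)⁻¹ * (2 / η)) := by
        rw [integral_xi_comp_mul_sub (by positivity)]
        gcongr
        exact integral_xi_le hη _ _
    _ = _ := by
        rw [hm]
        field_simp

-- The column rate `2 ^ (-η)` is better than the row rate `2 ^ (-η / 2)`, to which it is relaxed.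
theorem exists_sum_dyadicMean_sq_le (κ : Type*) {η c : ℝ} (hη0 : 0 < η) (hη1 : η ≤ 1)
    (hc : 0 ≤ c) :
    ∃ C : ℝ, 0 ≤ C ∧ ∀ (T : Finset κ) (lev : κ → ℕ) (e : κ → ℤ) (φ : κ → ℝ → ℝ),
      IsBumpFamily η c T lev e φ → ∀ (b : κ → ℝ) (K : ℕ),
        ∑ k ∈ Finset.range K, dyadicMean k (fun l =>
          (∑ j ∈ T, b j * |dyadicIncrement (dyadicAvg (φ j)) k l|) ^ 2) ≤
            C * ∑ j ∈ T, b j ^ 2 := by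
  obtain ⟨Z, hZ0, hZ⟩ := exists_sum_xi_lattice_le κ hη0
  obtain ⟨Z', -, hZ'⟩ := exists_sum_xi_lattice_le κ (half_pos hη0)
  set R := max (c * Z) (8 * c / η * Z')
  set τ : ℝ := 2 ^ (-(η / 4))
  have hτ0 : 0 < τ := by positivity
  have hτ1 : τ < 1 := Real.rpow_lt_one_of_one_lt_of_neg one_lt_two (by linarith)
  have hτ_sq : ∀ i, τ ^ (2 * i) = ((2 : ℝ) ^ (-(η / 2))) ^ i := fun i => by
    rw [pow_mul, ← Real.rpow_mul_natCast two_pos.le]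
    norm_num
    ring_nf
  have hR : 0 ≤ R := le_max_of_le_left (by positivity)
  refine ⟨R * (2 * c / η) * (2 / (1 - τ)) ^ 2, by positivity, fun T lev e φ hφ => ?_⟩
  refine sum_dyadicMean_sq_le_of_two_scale (lev := lev) (σ := fun m => 2 ^ ((m : ℝ) / 2)) hτ0 hτ1
    (fun m => by positivity) hR (by positivity) (fun k l j _ => abs_nonneg _)
    (fun k l m hl => ?_) (fun k j hj => ?_)
  · rcases le_total m k with hmk | hkm
    · refine (hφ.sum_level_abs_dyadicIncrement_le_of_fine hη0.le hc hZ hl m).trans ?_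
      rw [Nat.sub_eq_zero_of_le hmk, mul_zero, pow_zero, mul_one, mul_right_comm]
      gcongr
      exact le_max_left _ _
    · refine (hφ.sum_level_abs_dyadicIncrement_le_of_coarse hη0 hη1 hc hZ' hl hkm).trans ?_
      rw [hτ_sq]
      gcongr
      exact le_max_right _ _
  · refine (hφ.dyadicMean_abs_dyadicIncrement_le hη0 hc k hj).trans ?_
    rw [hτ_sq]
    gcongr
    · exact one_le_two
    · linarith

end IsBumpFamily

theorem IsBumpFamily.exists_lintegral_iSup_sq_le (κ : Type*) {η c : ℝ} (hη0 : 0 < η) (hη1 : η ≤ 1)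
    (hc : 0 ≤ c) :
    ∃ C : ℝ, 0 ≤ C ∧ ∀ (T : Finset κ) (lev : κ → ℕ) (e : κ → ℤ) (φ : κ → ℝ → ℝ),
      IsBumpFamily η c T lev e φ → ∀ {ι : Type} [Fintype ι] (U : ι → Finset κ), (∀ i, U i ⊆ T) →
        ∀ b : κ → ℝ, ∫⁻ x in Ico (0 : ℝ) 1, ⨆ i, ENNReal.ofReal ((∑ j ∈ U i, b j * φ j x) ^ 2) ≤
          ENNReal.ofReal (C * Real.log (Fintype.card ι + 1) * ∑ j ∈ T, b j ^ 2) := by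
  obtain ⟨C, hC, h_square⟩ := exists_sum_dyadicMean_sq_le κ hη0 hη1 hc
  refine ⟨maximalConst * C, mul_nonneg maximalConst_pos.le hC, fun T lev e φ hφ ι _ U hU b => ?_⟩
  have h_cont : ∀ i, ∀ j ∈ U i, ContinuousOn (φ j) (Icc 0 1) :=
    fun i j hj => (hφ.isBump j (hU i hj)).continuousOn
  refine (lintegral_iSup_sq_le (f := fun i x => ∑ j ∈ U i, b j * φ j x)
    (fun i => continuousOn_finsetSum _ fun j hj => (h_cont i j hj).const_mul (b j))
    (fun i => ?_) (fun i k l hl => ?_)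
    (h_square T lev e φ hφ fun j => |b j|)).trans_eq (by simp only [sq_abs]; ring_nf)
  · have h_bump := fun j hj => hφ.isBump j (hU i hj)
    rw [intervalIntegral.integral_finsetSum fun j hj =>
      ((h_bump j hj).intervalIntegrable (by simp) (by simp)).const_mul _]
    refine Finset.sum_eq_zero fun j hj => ?_
    rw [intervalIntegral.integral_const_mul, (h_bump j hj).integral_eq_zero, mul_zero]
  · rw [dyadicIncrement_dyadicAvg_sum (h_cont i) b hl]
    refine (Finset.abs_sum_le_sum_abs _ _).trans ?_
    simp only [abs_mul]
    exact Finset.sum_le_sum_of_subset_of_nonneg (hU i) fun j _ _ => by positivity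

/-! ### Wavelet systems -/

/-- The numerator of the center of the wavelet of index `j`, which is the dyadic rational
`centerIndex j / 2 ^ Nat.clog 2 j`; the level of the index `j` is `Nat.clog 2 j`. -/
def centerIndex (j : ℕ) : ℤ := 2 * j - 2 ^ Nat.clog 2 j - 1

theorem clog_pos_of_two_le {j : ℕ} (hj : 2 ≤ j) : 1 ≤ Nat.clog 2 j :=
  Nat.clog_pos one_lt_two hj

theorem tpt_clog {j : ℕ} (hj : 2 ≤ j) :
    tpt (Nat.clog 2 j) j = centerIndex j / 2 ^ Nat.clog 2 j := by
  obtain ⟨m, hm⟩ := Nat.exists_eq_add_of_le' (clog_pos_of_two_le hj)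
  rw [tpt, centerIndex, hm, Nat.add_sub_cancel]
  push_cast
  ring

theorem mem_Ioc_clog {j : ℕ} (hj : 2 ≤ j) :
    j ∈ Finset.Ioc (2 ^ (Nat.clog 2 j - 1)) (2 ^ Nat.clog 2 j) :=
  Finset.mem_Ioc.2 ⟨Nat.pow_pred_clog_lt_self one_lt_two hj, Nat.le_pow_clog one_lt_two j⟩

theorem integral_Ioo_eq_intervalIntegral (f : ℝ → ℝ) :
    ∫ x in Ioo (0 : ℝ) 1, f x = ∫ x in (0 : ℝ)..1, f x := by
  rw [intervalIntegral.integral_of_le zero_le_one, integral_Ioc_eq_integral_Ioo]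

section WaveletSystem

variable {δ α c : ℝ} {φ : ℕ → ℝ → ℝ}

theorem WaveletDecay.nonneg (h : WaveletDecay δ c φ) : 0 ≤ c := by
  have h_zero := (abs_nonneg _).trans (h 1 le_rfl 2 (by simp) 0 (by simp))
  exact nonneg_of_mul_nonneg_left (nonneg_of_mul_nonneg_left h_zero (xi_pos _ _)) (by positivity)

theorem WaveletHolder.continuousOn (h : WaveletHolder δ α c φ) (hα : 0 < α) {j : ℕ} (hj : 2 ≤ j) :
    ContinuousOn (φ j) (Icc 0 1) := by
  intro t ht
  set m := Nat.clog 2 j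
  set modulus : ℝ → ℝ := fun t' =>
    c * 2 ^ ((m : ℝ) / 2) * (2 ^ m * |t - t'|) ^ α * xi δ (2 ^ m * (t - tpt m j)) with h_modulus
  have h_lim : Filter.Tendsto modulus (nhdsWithin t (Icc 0 1)) (nhds 0) := by
    have h_cont : Continuous modulus :=
      (continuous_const.mul (Continuous.rpow_const (by fun_prop) fun _ => Or.inr hα.le)).mul
        continuous_const
    have h_zero : modulus t = 0 := by simp [h_modulus, Real.zero_rpow hα.ne']
    exact h_zero ▸ h_cont.continuousWithinAt
  have h_near : ∀ᶠ t' in nhdsWithin t (Icc (0 : ℝ) 1), |t - t'| ≤ ((2 : ℝ) ^ m)⁻¹ := by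
    filter_upwards [mem_nhdsWithin_of_mem_nhds
      (Metric.closedBall_mem_nhds t (ε := ((2 : ℝ) ^ m)⁻¹) (by positivity))] with t' ht'
    rwa [Metric.mem_closedBall, dist_comm, Real.dist_eq] at ht'
  rw [ContinuousWithinAt, tendsto_iff_dist_tendsto_zero]
  refine squeeze_zero' (.of_forall fun _ => dist_nonneg) ?_ h_lim
  filter_upwards [h_near, self_mem_nhdsWithin] with t' h_dist ht'
  rw [dist_comm, Real.dist_eq]
  exact h m (clog_pos_of_two_le hj) j (mem_Ioc_clog hj) t ht t' ht' h_dist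

theorem IsWaveletSystem.isBump (h : IsWaveletSystem δ α c φ) (hα : 0 < α) {η : ℝ} (hη : 0 ≤ η)
    (hηδ : η ≤ δ) (hηα : η ≤ α) {j : ℕ} (hj : 2 ≤ j) :
    IsBump η (c * 2 ^ ((Nat.clog 2 j : ℝ) / 2)) (2 ^ Nat.clog 2 j)
      (centerIndex j / 2 ^ Nat.clog 2 j) (φ j) := by
  obtain ⟨-, -, h_mean, h_decay, h_holder⟩ := h
  have hc := h_decay.nonneg
  rw [← tpt_clog hj]
  refine ⟨h_holder.continuousOn hα hj, ?_, fun x hx => ?_, fun x hx y hy hxy => ?_⟩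
  · rw [← integral_Ioo_eq_intervalIntegral]
    exact h_mean j (one_le_two.trans hj)
  · refine (h_decay _ (clog_pos_of_two_le hj) j (mem_Ioc_clog hj) x hx).trans ?_
    gcongr
    exact xi_anti_exponent hηδ _
  · refine (h_holder _ (clog_pos_of_two_le hj) j (mem_Ioc_clog hj) x hx y hy hxy).trans ?_
    have h_le_one : 2 ^ Nat.clog 2 j * |x - y| ≤ (1 : ℝ) := by
      rwa [← le_inv_mul_iff₀ (by positivity), mul_one]
    have h_xi := (xi_pos δ (2 ^ Nat.clog 2 j * (x - tpt (Nat.clog 2 j) j))).le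
    have h_pow := Real.rpow_le_rpow_of_exponent_ge' (by positivity) h_le_one hη hηα
    exact mul_le_mul (mul_le_mul_of_nonneg_left h_pow (by positivity)) (xi_anti_exponent hηδ _)
      h_xi (by positivity)

theorem IsWaveletSystem.isBumpFamily {κ : Type*} (h : IsWaveletSystem δ α c φ) (hα : 0 < α)
    {η : ℝ} (hη : 0 ≤ η) (hηδ : η ≤ δ) (hηα : η ≤ α) {T : Finset κ} {f : κ → ℕ}
    (hf : InjOn f T) (hT : ∀ x ∈ T, 2 ≤ f x) :
    IsBumpFamily η c T (fun x => Nat.clog 2 (f x)) (fun x => centerIndex (f x)) fun x => φ (f x) :=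
  ⟨fun x hx => h.isBump hα hη hηδ hηα (hT x hx), fun m x hx y hy hxy => by
    obtain ⟨hxT, hxm⟩ := hx
    obtain ⟨hyT, hym⟩ := hy
    simp only [centerIndex, hxm, hym] at hxy
    exact hf hxT hyT (by omega)⟩

theorem IsWaveletSystem.exists_lintegral_iSup_sq_le (κ : Type*) (h : IsWaveletSystem δ α c φ)
    (hδ : 0 < δ) (hα : 0 < α) :
    ∃ C : ℝ, 0 ≤ C ∧ ∀ (T : Finset κ) (f : κ → ℕ), InjOn f T → (∀ x ∈ T, 2 ≤ f x) →
      ∀ {ι : Type} [Fintype ι] (U : ι → Finset κ), (∀ i, U i ⊆ T) → ∀ b : κ → ℝ,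
        ∫⁻ x in Ico (0 : ℝ) 1, ⨆ i, ENNReal.ofReal ((∑ j ∈ U i, b j * φ (f j) x) ^ 2) ≤
          ENNReal.ofReal (C * Real.log (Fintype.card ι + 1) * ∑ j ∈ T, b j ^ 2) := by
  have hη : 0 < min (min δ α) 1 := by positivity
  obtain ⟨C, hC, h_max⟩ := IsBumpFamily.exists_lintegral_iSup_sq_le κ hη (min_le_right _ _)
    h.2.2.2.1.nonneg
  exact ⟨C, hC, fun T f hf hT => h_max T _ _ _ (h.isBumpFamily hα hη.le
    ((min_le_left _ _).trans (min_le_left _ _)) ((min_le_left _ _).trans (min_le_right _ _))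
    hf hT)⟩

theorem IsWaveletSystem.integral_sum_sq (h : IsWaveletSystem δ α c φ) (hα : 0 < α) {T : Finset ℕ}
    (hT : ∀ j ∈ T, 2 ≤ j) (b : ℕ → ℝ) :
    ∫ x in Ioo (0 : ℝ) 1, (∑ j ∈ T, b j * φ j x) ^ 2 = ∑ j ∈ T, b j ^ 2 := by
  obtain ⟨-, h_orth, -, -, h_holder⟩ := h
  have h_int : ∀ i ∈ T, ∀ j ∈ T,
      IntegrableOn (fun x => b i * b j * (φ i x * φ j x)) (Ioo (0 : ℝ) 1) := fun i hi j hj =>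
    (((h_holder.continuousOn hα (hT i hi)).mul
      (h_holder.continuousOn hα (hT j hj))).const_mul _).integrableOn_Icc.mono_set
        Ioo_subset_Icc_self
  have h_expand : ∀ x, (∑ j ∈ T, b j * φ j x) ^ 2 =
      ∑ i ∈ T, ∑ j ∈ T, b i * b j * (φ i x * φ j x) := fun x => by
    rw [sq, Finset.sum_mul_sum]
    exact Finset.sum_congr rfl fun i _ => Finset.sum_congr rfl fun j _ => mul_mul_mul_comm ..
  simp only [h_expand]
  rw [integral_finsetSum _ fun i hi => integrable_finsetSum _ fun j hj => h_int i hi j hj]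
  refine Finset.sum_congr rfl fun i hi => ?_
  rw [integral_finsetSum _ fun j hj => h_int i hi j hj]
  calc _ = ∑ j ∈ T, if i = j then b i * b j else 0 := by
        refine Finset.sum_congr rfl fun j hj => ?_
        rw [integral_const_mul, h_orth i j (one_le_two.trans (hT i hi))
          (one_le_two.trans (hT j hj)), mul_ite, mul_one, mul_zero]
    _ = b i ^ 2 := by rw [Finset.sum_ite_eq, if_pos hi, sq]

end WaveletSystem

/-! ### Weyl multipliers -/

section WeylMultiplier

/-- The endpoints of the blocks into which the Menshov–Rademacher argument cuts a series: for
`blockStart k ≤ n < blockStart (k + 1)`, the logarithm of `n` is comparable to `2 ^ k`. -/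
def blockStart (k : ℕ) : ℕ := 2 ^ 2 ^ k

theorem blockStart_mono : Monotone blockStart := fun _ _ h =>
  Nat.pow_le_pow_right two_pos (Nat.pow_le_pow_right two_pos h)

theorem one_le_blockStart (k : ℕ) : 1 ≤ blockStart k := Nat.one_le_two_pow

theorem log_blockStart (k : ℕ) : Real.log (blockStart k) = 2 ^ k * Real.log 2 := by
  simp [blockStart, Real.log_pow]

theorem blockStart_log_log_le {N : ℕ} (hN : 2 ≤ N) : blockStart (Nat.log 2 (Nat.log 2 N)) ≤ N :=
  (Nat.pow_le_pow_right two_pos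
    (Nat.pow_log_le_self 2 (Nat.log_pos one_lt_two hN).ne')).trans
      (Nat.pow_log_le_self 2 (by omega))

theorem lt_blockStart_log_log_succ (N : ℕ) : N < blockStart (Nat.log 2 (Nat.log 2 N) + 1) :=
  (Nat.lt_pow_succ_log_self one_lt_two N).trans_le
    (Nat.pow_le_pow_right two_pos (Nat.lt_pow_succ_log_self one_lt_two _))

theorem tendsto_log_log_atTop :
    Filter.Tendsto (fun N => Nat.log 2 (Nat.log 2 N)) Filter.atTop Filter.atTop := by
  refine Filter.tendsto_atTop.2 fun k => ?_
  filter_upwards [Filter.eventually_ge_atTop (blockStart k)] with N hN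
  exact Nat.le_log_of_pow_le one_lt_two (Nat.le_log_of_pow_le one_lt_two hN)

theorem sum_range_sum_Ico_blockStart (f : ℕ → ℝ) (K : ℕ) :
    ∑ k ∈ Finset.range K, ∑ n ∈ Finset.Ico (blockStart k) (blockStart (k + 1)), f n =
      ∑ n ∈ Finset.Ico (blockStart 0) (blockStart K), f n := by
  induction K with
  | zero => simp
  | succ K ih =>
    rw [Finset.sum_range_succ, ih, Finset.sum_Ico_consecutive _ (blockStart_mono K.zero_le)
      (blockStart_mono K.le_succ)]

theorem two_pow_le_div_mul_log {k n : ℕ} (h : blockStart k ≤ n) :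
    2 ^ (k + 1) ≤ 2 / Real.log 2 * Real.log (n + 1) := by
  have h_log_two : 0 < Real.log 2 := Real.log_pos one_lt_two
  have h_le : 2 ^ k * Real.log 2 ≤ Real.log (n + 1) := by
    rw [← log_blockStart]
    exact Real.log_le_log (mod_cast one_le_blockStart k) (by exact_mod_cast h.trans n.le_succ)
  rw [div_mul_eq_mul_div, le_div_iff₀ h_log_two, pow_succ']
  linarith

theorem summable_two_pow_mul_sum_Ico_blockStart {A : ℕ → ℝ} (hA : ∀ n, 0 ≤ A n)
    (h : Summable fun n : ℕ => A n * Real.log (n + 1)) :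
    Summable fun k =>
      2 ^ (k + 1) * ∑ n ∈ Finset.Ico (blockStart k) (blockStart (k + 1)), A n := by
  have h_nonneg : ∀ n : ℕ, 0 ≤ A n * Real.log (n + 1) := fun n =>
    mul_nonneg (hA n) (by exact_mod_cast Real.log_natCast_nonneg (n + 1))
  have h_blocks : Summable fun k =>
      ∑ n ∈ Finset.Ico (blockStart k) (blockStart (k + 1)), A n * Real.log (n + 1) := by
    refine summable_of_sum_range_le (c := ∑' n : ℕ, A n * Real.log (n + 1))
      (fun k => Finset.sum_nonneg fun n _ => h_nonneg n) fun K => ?_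
    rw [sum_range_sum_Ico_blockStart fun n => A n * Real.log (n + 1)]
    exact h.sum_le_tsum _ fun n _ => h_nonneg n
  refine (h_blocks.mul_left (2 / Real.log 2)).of_nonneg_of_le
    (fun k => mul_nonneg (by positivity) (Finset.sum_nonneg fun n _ => hA n)) (fun k => ?_)
  rw [Finset.mul_sum, Finset.mul_sum]
  refine Finset.sum_le_sum fun n hn => ?_
  rw [mul_left_comm, mul_comm]
  exact mul_le_mul_of_nonneg_left (two_pow_le_div_mul_log (Finset.mem_Ico.1 hn).1) (hA n)

theorem exists_tendsto_of_summable_two_pow_mul_sq_sub {u : ℕ → ℝ}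
    (h : Summable fun k => 2 ^ k * (u (k + 1) - u k) ^ 2) :
    ∃ L, Filter.Tendsto u Filter.atTop (nhds L) := by
  have h_amgm : ∀ k, |u (k + 1) - u k| ≤ (1 / 2) ^ k + 2 ^ k * (u (k + 1) - u k) ^ 2 := fun k => by
    have h_inv : (2 : ℝ) ^ k * (1 / 2) ^ k = 1 := by rw [← mul_pow]; norm_num
    have h_sq := mul_nonneg (pow_nonneg zero_le_two k)
      (sq_nonneg (|u (k + 1) - u k| - (1 / 2 : ℝ) ^ k))
    rw [← sq_abs (u (k + 1) - u k)]
    have h_expand : (2 : ℝ) ^ k * (|u (k + 1) - u k| - (1 / 2) ^ k) ^ 2 =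
        2 ^ k * |u (k + 1) - u k| ^ 2 + (1 / 2) ^ k - 2 * |u (k + 1) - u k| := by
      linear_combination ((1 / 2) ^ k - 2 * |u (k + 1) - u k|) * h_inv
    linarith [abs_nonneg (u (k + 1) - u k)]
  have h_increments : Summable fun k => u (k + 1) - u k :=
    (summable_geometric_two.add h).of_norm_bounded h_amgm
  have h_lim := h_increments.hasSum.tendsto_sum_nat
  simp only [Finset.sum_range_sub] at h_lim
  exact ⟨_, (h_lim.add_const (u 0)).congr fun k => sub_add_cancel _ _⟩

theorem tendsto_of_tendsto_comp_of_ofReal_sq_sub_le {S : ℕ → ℝ} {t κ : ℕ → ℕ} {L : ℝ}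
    {M : ℕ → ENNReal} (hL : Filter.Tendsto (S ∘ t) Filter.atTop (nhds L))
    (hκ : Filter.Tendsto κ Filter.atTop Filter.atTop)
    (hM : Filter.Tendsto M Filter.atTop (nhds 0))
    (h : ∀ᶠ N in Filter.atTop, ENNReal.ofReal ((S N - S (t (κ N))) ^ 2) ≤ M (κ N)) :
    Filter.Tendsto S Filter.atTop (nhds L) := by
  have h_sq : Filter.Tendsto (fun N => ENNReal.ofReal ((S N - S (t (κ N))) ^ 2)) Filter.atTop
      (nhds 0) :=
    tendsto_of_tendsto_of_tendsto_of_le_of_le' tendsto_const_nhds (hM.comp hκ)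
      (.of_forall fun _ => zero_le) h
  have h_abs : Filter.Tendsto (fun N => |S N - S (t (κ N))|) Filter.atTop (nhds 0) := by
    have h_sqrt := (Real.continuous_sqrt.tendsto _).comp
      ((ENNReal.tendsto_toReal ENNReal.zero_ne_top).comp h_sq)
    simpa [Function.comp_def, ENNReal.toReal_ofReal, sq_nonneg, Real.sqrt_sq_eq_abs] using h_sqrt
  simpa using ((tendsto_zero_iff_abs_tendsto_zero _).2 h_abs).add (hL.comp hκ)

variable {X : Type*} [MeasurableSpace X] {μ : Measure X}

theorem ae_tsum_ne_top_of_lintegral_le {F : ℕ → X → ENNReal} (hF : ∀ k, Measurable (F k))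
    {β : ℕ → ℝ} (hβ : Summable β) (h : ∀ k, ∫⁻ x, F k x ∂μ ≤ ENNReal.ofReal (β k)) :
    ∀ᵐ x ∂μ, ∑' k, F k x ≠ ⊤ := by
  refine (ae_lt_top (Measurable.tsum hF) ?_).mono fun x hx => hx.ne
  rw [lintegral_tsum fun k => (hF k).aemeasurable]
  exact ne_top_of_le_ne_top hβ.tsum_ofReal_ne_top (ENNReal.tsum_le_tsum h)

theorem log_card_Icc_blockStart_add_one_le (k : ℕ) :
    Real.log ((Finset.Icc (blockStart k) (blockStart (k + 1))).card + 1) ≤ 2 ^ (k + 1) := by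
  have h_card : (Finset.Icc (blockStart k) (blockStart (k + 1))).card + 1 ≤
      blockStart (k + 1) := by
    have h_two : 2 ≤ blockStart k := Nat.le_self_pow (by positivity) 2
    have h_mono : blockStart k ≤ blockStart (k + 1) := blockStart_mono k.le_succ
    rw [Nat.card_Icc]
    omega
  calc _ ≤ Real.log (blockStart (k + 1)) :=
        Real.log_le_log (by positivity) (by exact_mod_cast h_card)
    _ = 2 ^ (k + 1) * Real.log 2 := log_blockStart _
    _ ≤ 2 ^ (k + 1) := mul_le_of_le_one_right (by positivity)
        (Real.log_two_lt_d9.le.trans (by norm_num))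

/-- The oscillation of the partial sums `S` over every finite set of indices costs only a
logarithm of the number of indices: the maximal inequality that makes `log n` a Weyl multiplier. -/
def HasLogMaximalBound (μ : Measure X) (C : ℝ) (A : ℕ → ℝ) (S : ℕ → X → ℝ) : Prop :=
  ∀ p q : ℕ, ∀ s ⊆ Finset.Icc p q,
    ∫⁻ x, ⨆ N ∈ s, ENNReal.ofReal ((S N x - S p x) ^ 2) ∂μ ≤
      ENNReal.ofReal (C * Real.log (s.card + 1) * ∑ n ∈ Finset.Ico p q, A n)

namespace HasLogMaximalBound

variable {C : ℝ} {A : ℕ → ℝ} {S : ℕ → X → ℝ}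

theorem lintegral_block_oscillation_le (h : HasLogMaximalBound μ C A S) (hC : 0 ≤ C)
    (hA : ∀ n, 0 ≤ A n) (k : ℕ) :
    ∫⁻ x, ⨆ N ∈ Finset.Icc (blockStart k) (blockStart (k + 1)),
        ENNReal.ofReal ((S N x - S (blockStart k) x) ^ 2) ∂μ ≤
      ENNReal.ofReal
        (C * (2 ^ (k + 1) * ∑ n ∈ Finset.Ico (blockStart k) (blockStart (k + 1)), A n)) := by
  refine (h _ _ _ subset_rfl).trans (ENNReal.ofReal_le_ofReal ?_)
  rw [mul_assoc]
  exact mul_le_mul_of_nonneg_left (mul_le_mul_of_nonneg_right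
    (log_card_Icc_blockStart_add_one_le k) (Finset.sum_nonneg fun n _ => hA n)) hC

theorem lintegral_block_increment_le (h : HasLogMaximalBound μ C A S)
    (hS : ∀ N, Measurable (S N)) (hC : 0 ≤ C) (hA : ∀ n, 0 ≤ A n) (k : ℕ) :
    ∫⁻ x, ENNReal.ofReal (2 ^ k * (S (blockStart (k + 1)) x - S (blockStart k) x) ^ 2) ∂μ ≤
      ENNReal.ofReal
        (C * (2 ^ (k + 1) * ∑ n ∈ Finset.Ico (blockStart k) (blockStart (k + 1)), A n)) := by
  have h_single := h (blockStart k) (blockStart (k + 1)) {blockStart (k + 1)}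
    (Finset.singleton_subset_iff.2 (Finset.right_mem_Icc.2 (blockStart_mono k.le_succ)))
  simp only [Finset.mem_singleton, iSup_iSup_eq_left, Finset.card_singleton, Nat.cast_one]
    at h_single
  have h_sum : 0 ≤ ∑ n ∈ Finset.Ico (blockStart k) (blockStart (k + 1)), A n :=
    Finset.sum_nonneg fun n _ => hA n
  have h_log : Real.log (1 + 1) ≤ 2 :=
    (Real.log_le_self (by norm_num)).trans_eq one_add_one_eq_two
  simp only [ENNReal.ofReal_mul (pow_nonneg zero_le_two k : (0 : ℝ) ≤ 2 ^ k)]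
  rw [lintegral_const_mul _ (by fun_prop)]
  refine (mul_le_mul_right h_single _).trans ?_
  rw [← ENNReal.ofReal_mul (by positivity)]
  refine ENNReal.ofReal_le_ofReal ?_
  calc _ ≤ 2 ^ k * (C * 2 * ∑ n ∈ Finset.Ico (blockStart k) (blockStart (k + 1)), A n) := by
        gcongr
    _ = _ := by ring

theorem ae_exists_tendsto (h : HasLogMaximalBound μ C A S) (hS : ∀ N, Measurable (S N))
    (hC : 0 ≤ C) (hA : ∀ n, 0 ≤ A n) (hsum : Summable fun n : ℕ => A n * Real.log (n + 1)) :
    ∀ᵐ x ∂μ, ∃ L, Filter.Tendsto (fun N => S N x) Filter.atTop (nhds L) := by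
  have h_blocks := (summable_two_pow_mul_sum_Ico_blockStart hA hsum).mul_left C
  filter_upwards [ae_tsum_ne_top_of_lintegral_le (fun k => Measurable.biSup _
      (Finset.countable_toSet _) fun N _ => (((hS N).sub (hS _)).pow_const 2).ennreal_ofReal)
      h_blocks (h.lintegral_block_oscillation_le hC hA),
    ae_tsum_ne_top_of_lintegral_le (fun k => by fun_prop) h_blocks
      (h.lintegral_block_increment_le hS hC hA)] with x h_osc h_incr
  obtain ⟨L, hL⟩ := exists_tendsto_of_summable_two_pow_mul_sq_sub
    (u := fun k => S (blockStart k) x) <| (ENNReal.summable_toReal h_incr).congr fun k =>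
      ENNReal.toReal_ofReal (by positivity)
  refine ⟨L, tendsto_of_tendsto_comp_of_ofReal_sq_sub_le (S := fun N => S N x) hL
    tendsto_log_log_atTop (ENNReal.tendsto_atTop_zero_of_tsum_ne_top h_osc) ?_⟩
  filter_upwards [Filter.eventually_ge_atTop 2] with N hN
  exact le_iSup₂ (f := fun N _ => ENNReal.ofReal ((S N x - S (blockStart _) x) ^ 2)) N
    (Finset.mem_Icc.2 ⟨blockStart_log_log_le hN, (lt_blockStart_log_log_succ N).le⟩)

end HasLogMaximalBound

end WeylMultiplier

/-! ### Non-overlapping polynomials -/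

section NonOverlapping

variable {G : ℕ → Finset ℕ}

theorem injOn_snd_sigma (hG : Pairwise fun m n => Disjoint (G m) (G n)) (s : Finset ℕ) :
    InjOn Sigma.snd (s.sigma G : Set (Σ _ : ℕ, ℕ)) := by
  rintro ⟨m, i⟩ hm ⟨n, j⟩ hn rfl
  have h_eq : m = n := by
    by_contra hne
    exact Finset.disjoint_left.1 (hG hne) (Finset.mem_sigma.1 hm).2 (Finset.mem_sigma.1 hn).2
  rw [h_eq]

theorem eventually_forall_mem_le_of_pairwise_disjoint
    (hG : Pairwise fun m n => Disjoint (G m) (G n)) (K : ℕ) :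
    ∀ᶠ n in Filter.atTop, ∀ j ∈ G n, K ≤ j := by
  have h_notMem : ∀ᶠ n in Filter.atTop, ∀ j ∈ Finset.range K, j ∉ G n := by
    refine (Filter.eventually_all_finset _).2 fun j _ => ?_
    by_cases hj : ∃ m, j ∈ G m
    · obtain ⟨m, hm⟩ := hj
      filter_upwards [Filter.eventually_gt_atTop m] with n hn
      exact Finset.disjoint_left.1 (hG hn.ne) hm
    · exact .of_forall fun n hn => hj ⟨n, hn⟩
  filter_upwards [h_notMem] with n hn j hj
  exact not_lt.1 fun hlt => hn j (Finset.mem_range.2 hlt) hj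

theorem exists_tendsto_sum_Icc_one_of_eventuallyEq {f g : ℕ → ℝ} (hfg : f =ᶠ[Filter.atTop] g)
    (hg : ∃ L, Filter.Tendsto (fun N => ∑ n ∈ Finset.range N, g n) Filter.atTop (nhds L)) :
    ∃ L, Filter.Tendsto (fun N => ∑ n ∈ Finset.Icc 1 N, f n) Filter.atTop (nhds L) := by
  obtain ⟨L, hL⟩ := hg
  obtain ⟨n₀, hn₀⟩ := Filter.eventually_atTop.1 hfg
  refine ⟨L + (∑ n ∈ Finset.range n₀, (f n - g n) - f 0),
    ((hL.comp (Filter.tendsto_add_atTop_nat 1)).add_const _).congr' ?_⟩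
  filter_upwards [Filter.eventually_ge_atTop n₀] with N hN
  have h_shift : ∑ n ∈ Finset.Icc 1 N, f n = ∑ n ∈ Finset.range (N + 1), f n - f 0 := by
    rw [Finset.range_eq_Ico, Finset.sum_eq_sum_Ico_succ_bot N.succ_pos, add_sub_cancel_left]
    rfl
  rw [h_shift, ← Finset.eventually_constant_sum (fun n hn => sub_eq_zero.2 (hn₀ n hn))
    (hN.trans N.le_succ), Finset.sum_sub_distrib, Function.comp_apply]
  ring

variable {δ α c : ℝ} {φ : ℕ → ℝ → ℝ}

theorem IsWaveletSystem.exists_hasLogMaximalBound (h : IsWaveletSystem δ α c φ) (hδ : 0 < δ)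
    (hα : 0 < α) :
    ∃ C, 0 ≤ C ∧ ∀ G : ℕ → Finset ℕ, (Pairwise fun m n => Disjoint (G m) (G n)) →
      (∀ n, ∀ j ∈ G n, 2 ≤ j) → ∀ b : ℕ → ℕ → ℝ,
        HasLogMaximalBound (volume.restrict (Ico 0 1)) C (fun n => ∑ j ∈ G n, b n j ^ 2)
          fun N x => ∑ n ∈ Finset.range N, ∑ j ∈ G n, b n j * φ j x := by
  obtain ⟨C, hC, h_max⟩ := h.exists_lintegral_iSup_sq_le (Σ _ : ℕ, ℕ) hδ hα
  refine ⟨C, hC, fun G hG hG2 b p q s hs => ?_⟩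
  have h_block := h_max ((Finset.Ico p q).sigma G) Sigma.snd (injOn_snd_sigma hG _)
    (fun x hx => hG2 _ _ (Finset.mem_sigma.1 hx).2) (fun N : s => (Finset.Ico p N).sigma G)
    (fun N => Finset.sigma_mono
      (Finset.Ico_subset_Ico_right (Finset.mem_Icc.1 (hs N.2)).2) fun _ => subset_rfl)
    fun x => b x.1 x.2
  simp only [Finset.sum_sigma, Fintype.card_coe] at h_block
  refine le_of_eq_of_le (lintegral_congr fun x => ?_) h_block
  rw [iSup_subtype']
  refine iSup_congr fun N => ?_
  rw [Finset.sum_Ico_eq_sub _ (Finset.mem_Icc.1 (hs N.2)).1]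

theorem IsWaveletSystem.ae_exists_tendsto (h : IsWaveletSystem δ α c φ) (hδ : 0 < δ) (hα : 0 < α)
    (hG : Pairwise fun m n => Disjoint (G m) (G n)) (hG2 : ∀ n, ∀ j ∈ G n, 2 ≤ j)
    {b : ℕ → ℕ → ℝ} (hb : Summable fun n : ℕ => (∑ j ∈ G n, b n j ^ 2) * Real.log (n + 1)) :
    ∀ᵐ x ∂volume.restrict (Icc 0 1), ∃ L, Filter.Tendsto
      (fun N => ∑ n ∈ Finset.range N, ∑ j ∈ G n, b n j * φ j x) Filter.atTop (nhds L) := by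
  obtain ⟨C, hC, h_max⟩ := h.exists_hasLogMaximalBound hδ hα
  have h_meas : ∀ j, Measurable (φ j) := h.1
  rw [← Measure.restrict_congr_set Ico_ae_eq_Icc]
  exact (h_max G hG hG2 b).ae_exists_tendsto (fun N => by fun_prop) hC
    (fun n => Finset.sum_nonneg fun j _ => sq_nonneg _) hb

end NonOverlapping

theorem stmt18_general {δ α c : ℝ} (hδ : 0 < δ) (hα : 0 < α) {φ : ℕ → ℝ → ℝ}
    (hφ : IsWaveletSystem δ α c φ) {G : ℕ → Finset ℕ}
    (hG : Pairwise fun m n => Disjoint (G m) (G n)) {cf : ℕ → ℝ} {p : ℕ → ℝ → ℝ}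
    (hp : ∀ n, p n = fun x => ∑ j ∈ G n, cf j * φ j x)
    (hnorm : ∀ n, 1 ≤ n → ∫ x in Ioo (0 : ℝ) 1, p n x ^ 2 = 1) {a : ℕ → ℝ}
    (ha : Summable fun n : ℕ => a n ^ 2 * Real.log (n + 1)) :
    ∀ᵐ x ∂volume.restrict (Icc (0 : ℝ) 1),
      ∃ L, Filter.Tendsto (fun N => ∑ n ∈ Finset.Icc 1 N, a n * p n x) Filter.atTop (nhds L) := by
  -- The indices `0` and `1`, which no decay bound controls, occur in finitely many `G n` only.
  set G' : ℕ → Finset ℕ := fun n => (G n).filter (2 ≤ ·)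
  have h_two_le := eventually_forall_mem_le_of_pairwise_disjoint hG 2
  have hG' : ∀ᶠ n in Filter.atTop, G' n = G n := h_two_le.mono fun n => Finset.filter_true_of_mem
  have h_norm : ∀ᶠ n in Filter.atTop, ∑ j ∈ G' n, (a n * cf j) ^ 2 = a n ^ 2 := by
    filter_upwards [hG', h_two_le, Filter.eventually_ge_atTop 1] with n hn h_le hn1
    have h_one := hnorm n hn1
    simp only [hp, hφ.integral_sum_sq hα h_le] at h_one
    simp only [hn, mul_pow, ← Finset.mul_sum, h_one, mul_one]
  have h_conv := hφ.ae_exists_tendsto hδ hα (G := G') (b := fun n j => a n * cf j)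
    (fun m n hmn => Finset.disjoint_filter_filter (hG hmn))
    (fun n j hj => (Finset.mem_filter.1 hj).2)
    (ha.congr_atTop (h_norm.mono fun n hn => by simp only [hn]))
  filter_upwards [h_conv] with x
  refine exists_tendsto_sum_Icc_one_of_eventuallyEq (hG'.mono fun n hn => ?_)
  simp only [hp, hn, Finset.mul_sum, mul_assoc]

/-- `log n` is an a.e. convergence Weyl multiplier for non-overlapping wavelet
polynomials. -/
theorem stmt18 (δ α c : ℝ) (hδ0 : 0 < δ) (hδ1 : δ < 1) (hα0 : 0 < α) (hα1 : α ≤ 1)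
    (hc : 0 < c) (φ : ℕ → ℝ → ℝ) (hφ : IsWaveletSystem δ α c φ)
    (G : ℕ → Finset ℕ)
    (hG : ∀ i j : ℕ, i ≠ j → Disjoint (G i) (G j))
    (cf : ℕ → ℝ) (p : ℕ → ℝ → ℝ)
    (hp : ∀ n : ℕ, p n = fun x => ∑ j ∈ G n, cf j * φ j x)
    (hnorm : ∀ n : ℕ, 1 ≤ n → (∫ x in Set.Ioo (0:ℝ) 1, (p n x) ^ 2) = 1)
    (a : ℕ → ℝ) (ha : Summable fun n : ℕ => a n ^ 2 * Real.log (n + 1)) :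
    ∀ᵐ x ∂(volume.restrict (Set.Icc (0:ℝ) 1)),
      ∃ L : ℝ, Filter.Tendsto (fun N => ∑ n ∈ Finset.Icc 1 N, a n * p n x)
        Filter.atTop (nhds L) :=
  stmt18_general hδ0 hα0 hφ (fun i j => hG i j) hp hnorm ha
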